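/- arXiv:1511.01132 — 9 statements merged into one kernel-verified Lean document; each statement's English description precedes it below -/
import Mathlib

section
/- In the share-model simultaneous first price auction with a mixed Nash equilibrium σ and parameters α > 1, γ > 1, the total budget of bidders outside I is small: Σ_{i∈Ī} B_i ≤ α·(γ + n/h)·REV(σ) + Σ_{i∈Ī₃} B_i. -/
/-!
Share-model simultaneous first price auction with `n` additive budgeted bidders,
`m` items, each divided into `h` identical shares.  Main theorem: for every mixed
Nash equilibrium `σ`, the optimal Liquid Welfare is at most `51.5` times the
expected Liquid Welfare at equilibrium, provided `h ≥ n ≥ 0` and `h ≥ 1`.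
-/

open Finset

/-- A share-model simultaneous first price auction: additive values `v i j ≥ 0`
(each of the `h` shares of item `j` is worth `v i j / h` to bidder `i`), budgets
`B i ≥ 0`, and a deterministic allocation rule `win` awarding every share to a
bidder with the highest bid on it (the winner pays her own bid). -/
structure ShareAuction (n m h : ℕ) where
  v : Fin n → Fin m → ℝ
  v_nonneg : ∀ i j, 0 ≤ v i j
  B : Fin n → ℝ
  B_nonneg : ∀ i, 0 ≤ B i
  win : (Fin n → Fin m → Fin h → ℝ) → Fin m → Fin h → Fin n
  win_max : ∀ (b : Fin n → Fin m → Fin h → ℝ) (j : Fin m) (ℓ : Fin h) (i : Fin n),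
    b i j ℓ ≤ b (win b j ℓ) j ℓ

namespace ShareAuction

variable {n m h : ℕ}

/-- The value bidder `i` derives from the shares she wins under bid profile `b`. -/
noncomputable def val (A : ShareAuction n m h) (i : Fin n) (b : Fin n → Fin m → Fin h → ℝ) : ℝ :=
  ∑ j : Fin m, ∑ ℓ : Fin h, if A.win b j ℓ = i then A.v i j / h else 0

/-- First-price payment: bidder `i` pays her own bid on every share she wins. -/
noncomputable def pay (A : ShareAuction n m h) (i : Fin n) (b : Fin n → Fin m → Fin h → ℝ) : ℝ :=
  ∑ j : Fin m, ∑ ℓ : Fin h, if A.win b j ℓ = i then b i j ℓ else 0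

/-- Quasilinear utility. -/
noncomputable def util (A : ShareAuction n m h) (i : Fin n) (b : Fin n → Fin m → Fin h → ℝ) : ℝ :=
  A.val i b - A.pay i b

end ShareAuction

/-- A mixed bid profile: a product distribution, bidder `i` placing probability
`p i k` on the (nonnegative) bid vector `β i k`, with finite support `Fin (K i)`. -/
structure MixedProfile (n m h : ℕ) where
  K : Fin n → ℕ
  p : ∀ i, Fin (K i) → ℝ
  p_nonneg : ∀ i k, 0 ≤ p i k
  p_sum : ∀ i, ∑ k, p i k = 1
  β : ∀ i, Fin (K i) → Fin m → Fin h → ℝ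
  β_nonneg : ∀ i k j ℓ, 0 ≤ β i k j ℓ

namespace MixedProfile

variable {n m h : ℕ}

/-- Probability of the sample point `ω` of the product distribution. -/
noncomputable def prob (σ : MixedProfile n m h) (ω : ∀ i, Fin (σ.K i)) : ℝ := ∏ i, σ.p i (ω i)

/-- The pure bid profile realized at sample point `ω`. -/
def bids (σ : MixedProfile n m h) (ω : ∀ i, Fin (σ.K i)) :
    Fin n → Fin m → Fin h → ℝ :=
  fun i => σ.β i (ω i)

/-- Expectation of a function of the bid profile under `σ`. -/
noncomputable def expect (σ : MixedProfile n m h)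
    (f : (Fin n → Fin m → Fin h → ℝ) → ℝ) : ℝ :=
  ∑ ω : ∀ i, Fin (σ.K i), σ.prob ω * f (σ.bids ω)

end MixedProfile

/-- `σ` is a mixed Nash equilibrium: payments stay within budgets almost surely,
and no bidder can profit in expectation by deviating to any deterministic
nonnegative bid vector whose bids sum to at most her budget. -/
def IsMixedNash {n m h : ℕ} (A : ShareAuction n m h) (σ : MixedProfile n m h) : Prop :=
  (∀ i (ω : ∀ i, Fin (σ.K i)), σ.prob ω ≠ 0 → A.pay i (σ.bids ω) ≤ A.B i) ∧
  ∀ i (b' : Fin m → Fin h → ℝ), (∀ j ℓ, 0 ≤ b' j ℓ) →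
    (∑ j : Fin m, ∑ ℓ : Fin h, b' j ℓ) ≤ A.B i →
    σ.expect (A.util i) ≥
      ∑ ω : ∀ i, Fin (σ.K i), σ.prob ω * A.util i (Function.update (σ.bids ω) i b')

/-- Expected Liquid Welfare of a mixed profile. -/
noncomputable def LW {n m h : ℕ} (A : ShareAuction n m h) (σ : MixedProfile n m h) : ℝ :=
  ∑ i, σ.expect (fun b => min (A.val i b) (A.B i))

/-- The value bidder `i` derives from a deterministic allocation of shares. -/
noncomputable def allocVal {n m h : ℕ} (A : ShareAuction n m h) (i : Fin n)
    (alloc : Fin m → Fin h → Fin n) : ℝ :=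
  ∑ j : Fin m, ∑ ℓ : Fin h, if alloc j ℓ = i then A.v i j / h else 0

section Quantities

variable {n m h : ℕ}

/-- The winning bid `p_j^ℓ(b) = max_i b_{ij}^ℓ` on share `ℓ` of item `j`
(the winner's bid, which is maximal by `win_max`). -/
noncomputable def wbid (A : ShareAuction n m h) (b : Fin n → Fin m → Fin h → ℝ)
    (j : Fin m) (ℓ : Fin h) : ℝ :=
  b (A.win b j ℓ) j ℓ

/-- Item price `p̄_j = α · Σ_ℓ E_{b∼σ}[p_j^ℓ(b)]`. -/
noncomputable def pbar (A : ShareAuction n m h) (σ : MixedProfile n m h) (α : ℝ)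
    (j : Fin m) : ℝ :=
  α * σ.expect (fun b => ∑ ℓ : Fin h, wbid A b j ℓ)

/-- Expected revenue `REV(σ) = (1/α) Σ_j p̄_j`. -/
noncomputable def REV (A : ShareAuction n m h) (σ : MixedProfile n m h) (α : ℝ) : ℝ :=
  (1 / α) * ∑ j : Fin m, pbar A σ α j

/-- `q i j`: expected fraction of the `h` shares of item `j` won by bidder `i`. -/
noncomputable def q (A : ShareAuction n m h) (σ : MixedProfile n m h)
    (i : Fin n) (j : Fin m) : ℝ :=
  σ.expect (fun b => (∑ ℓ : Fin h, if A.win b j ℓ = i then (1 : ℝ) else 0) / h)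

/-- `Q i = Pr_{b∼σ}[v_i(x_i(b)) ≥ B_i]`. -/
noncomputable def Qbig (A : ShareAuction n m h) (σ : MixedProfile n m h) (i : Fin n) : ℝ :=
  ∑ ω : ∀ i, Fin (σ.K i), if A.B i ≤ A.val i (σ.bids ω) then σ.prob ω else 0

/-- High value items `J_i = {j : v_{ij} ≥ p̄_j}`. -/
noncomputable def Jset (A : ShareAuction n m h) (σ : MixedProfile n m h) (α : ℝ)
    (i : Fin n) : Finset (Fin m) :=
  univ.filter fun j => pbar A σ α j ≤ A.v i j

/-- `I₁ = {i : γ · Σ_{j ∈ J_i} p̄_j q_{ij} ≤ B_i}`. -/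
noncomputable def I1 (A : ShareAuction n m h) (σ : MixedProfile n m h) (α γ : ℝ) :
    Finset (Fin n) :=
  univ.filter fun i => γ * ∑ j ∈ Jset A σ α i, pbar A σ α j * q A σ i j ≤ A.B i

/-- `I₂ = {i : Σ_j p̄_j / h ≤ B_i}`. -/
noncomputable def I2 (A : ShareAuction n m h) (σ : MixedProfile n m h) (α : ℝ) :
    Finset (Fin n) :=
  univ.filter fun i => (∑ j : Fin m, pbar A σ α j / h) ≤ A.B i

/-- `I₃ = {i : Q_i ≤ 1/(2γ)}`. -/
noncomputable def I3 (A : ShareAuction n m h) (σ : MixedProfile n m h) (γ : ℝ) :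
    Finset (Fin n) :=
  univ.filter fun i => Qbig A σ i ≤ 1 / (2 * γ)

/-- `I = I₁ ∩ I₂ ∩ I₃`. -/
noncomputable def Iset (A : ShareAuction n m h) (σ : MixedProfile n m h) (α γ : ℝ) :
    Finset (Fin n) :=
  I1 A σ α γ ∩ I2 A σ α ∩ I3 A σ γ

end Quantities

theorem prob_nonneg' {n m h : ℕ} (σ : MixedProfile n m h) (ω : ∀ i, Fin (σ.K i)) :
    0 ≤ σ.prob ω := Finset.prod_nonneg fun i _ => σ.p_nonneg i (ω i)

theorem prob_sum' {n m h : ℕ} (σ : MixedProfile n m h) :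
    ∑ ω : ∀ i, Fin (σ.K i), σ.prob ω = 1 := by
  unfold MixedProfile.prob
  rw [← Fintype.prod_sum]
  simp [σ.p_sum]

theorem expect_nonneg' {n m h : ℕ} (σ : MixedProfile n m h)
    (f : (Fin n → Fin m → Fin h → ℝ) → ℝ) (hf : ∀ ω, 0 ≤ f (σ.bids ω)) :
    0 ≤ σ.expect f :=
  Finset.sum_nonneg fun ω _ => mul_nonneg (prob_nonneg' σ ω) (hf ω)

theorem pbar_nonneg' {n m h : ℕ} (A : ShareAuction n m h) (σ : MixedProfile n m h)
    (α : ℝ) (hα : 1 < α) (j : Fin m) : 0 ≤ pbar A σ α j := by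
  refine mul_nonneg (by linarith) (expect_nonneg' σ _ fun ω => ?_)
  exact Finset.sum_nonneg fun ℓ _ => σ.β_nonneg _ _ _ _

theorem q_nonneg' {n m h : ℕ} (A : ShareAuction n m h) (σ : MixedProfile n m h)
    (i : Fin n) (j : Fin m) : 0 ≤ q A σ i j := by
  refine expect_nonneg' σ _ fun ω => div_nonneg (Finset.sum_nonneg fun ℓ _ => ?_) (by positivity)
  split_ifs <;> norm_num

theorem q_sum' {n m h : ℕ} (hh : 0 < h) (A : ShareAuction n m h) (σ : MixedProfile n m h)
    (j : Fin m) : ∑ i, q A σ i j = 1 := by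
  unfold q MixedProfile.expect
  rw [Finset.sum_comm]
  refine Eq.trans ?_ (prob_sum' σ)
  refine Finset.sum_congr rfl fun ω _ => ?_
  rw [← Finset.mul_sum, ← Finset.sum_div, Finset.sum_comm]
  have : (h : ℝ) ≠ 0 := by positivity
  simp [this]

/-- **The total budget of bidders outside `I` is small**:
`Σ_{i ∈ Ī} B_i ≤ α (γ + n/h) REV(σ) + Σ_{i ∈ Ī₃} B_i`. -/
theorem budget_outside_I_small {n m h : ℕ} (hh : 0 < h)
    (α γ : ℝ) (hα : 1 < α) (hγ : 1 < γ)
    (A : ShareAuction n m h) (σ : MixedProfile n m h) (hNash : IsMixedNash A σ) :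
    ∑ i ∈ univ \ Iset A σ α γ, A.B i ≤
      α * (γ + (n : ℝ) / (h : ℝ)) * REV A σ α + ∑ i ∈ univ \ I3 A σ γ, A.B i := by
  have hp := pbar_nonneg' A σ α hα
  have hq := q_nonneg' A σ
  have hh' : (0 : ℝ) < h := by exact_mod_cast hh
  have key : ∀ i, (if i ∈ univ \ Iset A σ α γ then A.B i else 0) ≤
      γ * ∑ j, pbar A σ α j * q A σ i j + (∑ j, pbar A σ α j / h) +
        (if i ∈ univ \ I3 A σ γ then A.B i else 0) := by
    intro i
    have h1 : 0 ≤ γ * ∑ j, pbar A σ α j * q A σ i j :=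
      mul_nonneg (by linarith) (Finset.sum_nonneg fun j _ => mul_nonneg (hp j) (hq i j))
    have h2 : 0 ≤ ∑ j, pbar A σ α j / h :=
      Finset.sum_nonneg fun j _ => div_nonneg (hp j) hh'.le
    have hB := A.B_nonneg i
    by_cases c3 : i ∈ I3 A σ γ
    · by_cases c1 : i ∈ I1 A σ α γ
      · by_cases c2 : i ∈ I2 A σ α
        · simp [Iset, c1, c2, c3]; linarith
        · have c2' := c2
          simp only [I2, mem_filter, mem_univ, true_and, not_le] at c2'
          simp [Iset, c2, c3]; linarith
      · have c1' := c1
        simp only [I1, mem_filter, mem_univ, true_and, not_le] at c1'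
        have : γ * ∑ j ∈ Jset A σ α i, pbar A σ α j * q A σ i j ≤
            γ * ∑ j, pbar A σ α j * q A σ i j :=
          mul_le_mul_of_nonneg_left (Finset.sum_le_sum_of_subset_of_nonneg (subset_univ _)
            fun j _ _ => mul_nonneg (hp j) (hq i j)) (by linarith)
        simp [Iset, c1, c3]; linarith
    · simp [Iset, c3]; linarith
  have S := Finset.sum_le_sum fun i (_ : i ∈ (univ : Finset (Fin n))) => key i
  rw [Finset.sum_add_distrib, Finset.sum_add_distrib, ← Finset.mul_sum,
    Finset.sum_comm (f := fun i j => pbar A σ α j * q A σ i j)] at S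
  simp only [← Finset.mul_sum, q_sum' hh, mul_one, ← Finset.sum_div, Finset.sum_const,
    Finset.card_univ, Fintype.card_fin, nsmul_eq_mul, Finset.sum_ite_mem,
    Finset.univ_inter] at S
  have e : α * (γ + (n : ℝ) / (h : ℝ)) * REV A σ α =
      γ * (∑ j, pbar A σ α j) + n * ((∑ j, pbar A σ α j) / h) := by
    have : α ≠ 0 := by linarith
    unfold REV
    field_simp
  rw [e, ← mul_div_assoc]
  exact S
end

section
/- (LLP deviations lemma) In the share-model simultaneous first price auction with a mixed Nash equilibrium σ and parameters α > 1, γ > 1, the bidders in I derive large value at equilibrium: Σ_{i∈I} Σ_{j=1}^m v_{ij}·q_{ij} ≥ (1/2 − 1/(2α)) · ( OPT − α·(1 + γ + n/h)·REV(σ) − Σ_{i∈Ī₃} B_i ). -/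
/-!
Share-model simultaneous first price auction with `n` additive budgeted bidders,
`m` items, each divided into `h` identical shares.  Main theorem: for every mixed
Nash equilibrium `σ`, the optimal Liquid Welfare is at most `51.5` times the
expected Liquid Welfare at equilibrium, provided `h ≥ n ≥ 0` and `h ≥ 1`.
-/

open Finset

namespace LLPAux

variable {n m h : ℕ}

lemma prob_nonneg (σ : MixedProfile n m h) (ω : ∀ i, Fin (σ.K i)) : 0 ≤ σ.prob ω :=
  Finset.prod_nonneg fun i _ => σ.p_nonneg i _

lemma prob_sum (σ : MixedProfile n m h) : ∑ ω : ∀ i, Fin (σ.K i), σ.prob ω = 1 := by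
  unfold MixedProfile.prob
  rw [← Fintype.prod_sum (fun i k => σ.p i k)]
  simp [σ.p_sum]

lemma wbid_nonneg (A : ShareAuction n m h) (σ : MixedProfile n m h) (ω : ∀ i, Fin (σ.K i))
    (j : Fin m) (ℓ : Fin h) : 0 ≤ wbid A (σ.bids ω) j ℓ :=
  σ.β_nonneg _ _ _ _

/-- Expected winning bid on a share. -/
noncomputable def ebid (A : ShareAuction n m h) (σ : MixedProfile n m h)
    (j : Fin m) (ℓ : Fin h) : ℝ := σ.expect (fun b => wbid A b j ℓ)

lemma pbar_eq (A : ShareAuction n m h) (σ : MixedProfile n m h) (α : ℝ) (j : Fin m) :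
    pbar A σ α j = α * ∑ ℓ, ebid A σ j ℓ := by
  unfold pbar ebid MixedProfile.expect
  congr 1
  rw [Finset.sum_comm]
  simp [Finset.mul_sum]

lemma ebid_nonneg (A : ShareAuction n m h) (σ : MixedProfile n m h)
    (j : Fin m) (ℓ : Fin h) : 0 ≤ ebid A σ j ℓ :=
  Finset.sum_nonneg fun ω _ => mul_nonneg (prob_nonneg σ ω) (wbid_nonneg A σ ω j ℓ)

lemma pbar_nonneg (A : ShareAuction n m h) (σ : MixedProfile n m h) {α : ℝ} (hα : 0 ≤ α)
    (j : Fin m) : 0 ≤ pbar A σ α j := by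
  rw [pbar_eq]
  exact mul_nonneg hα (Finset.sum_nonneg fun ℓ _ => ebid_nonneg A σ j ℓ)

lemma q_nonneg (A : ShareAuction n m h) (σ : MixedProfile n m h) (i : Fin n) (j : Fin m) :
    0 ≤ q A σ i j := by
  refine Finset.sum_nonneg fun ω _ => mul_nonneg (prob_nonneg σ ω) ?_
  refine div_nonneg (Finset.sum_nonneg fun ℓ _ => ?_) (Nat.cast_nonneg _)
  split_ifs <;> norm_num

/-- Every allocation gives out a total fraction of one. -/
lemma frac_sum (hh : 0 < h) (f : Fin h → Fin n) :
    ∑ i, (∑ ℓ : Fin h, if f ℓ = i then (1 : ℝ) else 0) / h = 1 := by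
  rw [← Finset.sum_div, Finset.sum_comm]
  have : (h : ℝ) ≠ 0 := by positivity
  simp [this]

lemma q_sum (hh : 0 < h) (A : ShareAuction n m h) (σ : MixedProfile n m h) (j : Fin m) :
    ∑ i, q A σ i j = 1 := by
  unfold q MixedProfile.expect
  rw [Finset.sum_comm]
  simp_rw [← Finset.mul_sum, frac_sum hh, mul_one]
  exact prob_sum σ

lemma expect_val (A : ShareAuction n m h) (σ : MixedProfile n m h) (i : Fin n) :
    σ.expect (A.val i) = ∑ j, A.v i j * q A σ i j := by
  unfold q MixedProfile.expect ShareAuction.val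
  simp_rw [Finset.mul_sum]
  rw [Finset.sum_comm]
  refine Finset.sum_congr rfl fun j _ => Finset.sum_congr rfl fun ω _ => ?_
  rw [Finset.sum_div, Finset.mul_sum, Finset.mul_sum]
  refine Finset.sum_congr rfl fun ℓ _ => ?_
  split_ifs
  · ring
  · ring

lemma expect_util_le (A : ShareAuction n m h) (σ : MixedProfile n m h) (i : Fin n) :
    σ.expect (A.util i) ≤ ∑ j, A.v i j * q A σ i j := by
  rw [← expect_val]
  refine Finset.sum_le_sum fun ω _ => mul_le_mul_of_nonneg_left ?_ (prob_nonneg σ ω)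
  unfold ShareAuction.util
  have : 0 ≤ A.pay i (σ.bids ω) := by
    refine Finset.sum_nonneg fun j _ => Finset.sum_nonneg fun ℓ _ => ?_
    split_ifs
    · exact σ.β_nonneg _ _ _ _
    · exact le_rfl
  linarith

/-- Pointwise Markov bound for the deviation on a share. -/
lemma dev_share (A : ShareAuction n m h) (b : Fin n → Fin m → Fin h → ℝ) (i : Fin n)
    (b' : Fin m → Fin h → ℝ) (j : Fin m) (ℓ : Fin h) (a : ℝ) (ha : 0 ≤ a)
    (hb : 0 ≤ wbid A b j ℓ) (hc : 0 < b' j ℓ) :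
    a * (1 - wbid A b j ℓ / b' j ℓ) ≤
      if A.win (Function.update b i b') j ℓ = i then a else 0 := by
  split_ifs with hw
  · have : 0 ≤ wbid A b j ℓ / b' j ℓ := by positivity
    nlinarith
  · have h1 := A.win_max (Function.update b i b') j ℓ i
    rw [Function.update_self, Function.update_of_ne hw] at h1
    have h2 := A.win_max b j ℓ (A.win (Function.update b i b') j ℓ)
    have h3 : 1 ≤ wbid A b j ℓ / b' j ℓ := by
      rw [one_le_div hc]
      exact h1.trans h2
    nlinarith

/-- Utility of the deviation which bids `c j + ε` on the shares in `S`. -/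
lemma dev_util (hh : 0 < h) (A : ShareAuction n m h) (b : Fin n → Fin m → Fin h → ℝ) (i : Fin n)
    (c : Fin m → ℝ) (ε : ℝ) (hε : 0 < ε) (S : Fin m → Fin h → Prop)
    [∀ j ℓ, Decidable (S j ℓ)] (hc0 : ∀ j, 0 ≤ c j)
    (hS : ∀ j ℓ, S j ℓ → c j ≤ A.v i j / h)
    (hb : ∀ j ℓ, 0 ≤ wbid A b j ℓ) :
    ∑ j, ∑ ℓ, (if S j ℓ then (1:ℝ) else 0) *
      ((A.v i j / h - c j) * (1 - wbid A b j ℓ / (c j + ε)) - ε) ≤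
      A.util i (Function.update b i (fun j ℓ => if S j ℓ then c j + ε else 0)) := by
  unfold ShareAuction.util ShareAuction.val ShareAuction.pay
  rw [← Finset.sum_sub_distrib]
  refine Finset.sum_le_sum fun j _ => ?_
  rw [← Finset.sum_sub_distrib]
  refine Finset.sum_le_sum fun ℓ _ => ?_
  rw [Function.update_self]
  by_cases hs : S j ℓ
  · have hpos : 0 < c j + ε := by linarith [hc0 j]
    have := dev_share A b i (fun j ℓ => if S j ℓ then c j + ε else 0) j ℓ
      (A.v i j / h - c j) (by linarith [hS j ℓ hs]) (hb j ℓ) (by simpa [hs] using hpos)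
    simp only [hs, if_true, one_mul] at this ⊢
    split_ifs at this ⊢ <;> linarith
  · simp only [hs, if_false, zero_mul, sub_zero]
    have : 0 ≤ A.v i j / h := div_nonneg (A.v_nonneg i j) (Nat.cast_nonneg _)
    split_ifs <;> linarith

/-- Expected version of `dev_util`. -/
lemma dev_expect (hh : 0 < h) (A : ShareAuction n m h) (σ : MixedProfile n m h) (i : Fin n)
    (c : Fin m → ℝ) (ε : ℝ) (hε : 0 < ε) (S : Fin m → Fin h → Prop)
    [∀ j ℓ, Decidable (S j ℓ)] (hc0 : ∀ j, 0 ≤ c j)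
    (hS : ∀ j ℓ, S j ℓ → c j ≤ A.v i j / h) :
    ∑ j, ∑ ℓ, (if S j ℓ then (1:ℝ) else 0) *
      ((A.v i j / h - c j) * (1 - ebid A σ j ℓ / (c j + ε)) - ε) ≤
      ∑ ω : ∀ i, Fin (σ.K i), σ.prob ω *
        A.util i (Function.update (σ.bids ω) i (fun j ℓ => if S j ℓ then c j + ε else 0)) := by
  have hpt := Finset.sum_le_sum fun ω (_ : ω ∈ (univ : Finset (∀ i, Fin (σ.K i)))) =>
    mul_le_mul_of_nonneg_left
      (dev_util hh A (σ.bids ω) i c ε hε S hc0 hS (wbid_nonneg A σ ω)) (prob_nonneg σ ω)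
  refine le_trans (le_of_eq ?_) hpt
  symm
  simp_rw [Finset.mul_sum]
  rw [Finset.sum_comm]
  refine Finset.sum_congr rfl fun j _ => ?_
  rw [Finset.sum_comm]
  refine Finset.sum_congr rfl fun ℓ _ => ?_
  have h1 : ebid A σ j ℓ = ∑ ω : ∀ i, Fin (σ.K i), σ.prob ω * wbid A (σ.bids ω) j ℓ := rfl
  have h2 := prob_sum σ
  set s : ℝ := if S j ℓ then (1:ℝ) else 0
  set a : ℝ := A.v i j / h - c j
  have h3 : ∀ ω : ∀ i, Fin (σ.K i),
      σ.prob ω * (s * (a * (1 - wbid A (σ.bids ω) j ℓ / (c j + ε)) - ε)) =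
      σ.prob ω * (s * (a - ε)) - (σ.prob ω * wbid A (σ.bids ω) j ℓ) * (s * a / (c j + ε)) := by
    intro ω; ring
  simp_rw [h3]
  rw [Finset.sum_sub_distrib, ← Finset.sum_mul, ← Finset.sum_mul, h2, ← h1]
  ring

/-- Fraction of item `j` that `alloc` gives to bidder `i`. -/
noncomputable def xfrac (alloc : Fin m → Fin h → Fin n) (i : Fin n) (j : Fin m) : ℝ :=
  (∑ ℓ : Fin h, if alloc j ℓ = i then (1 : ℝ) else 0) / h

lemma xfrac_nonneg (alloc : Fin m → Fin h → Fin n) (i : Fin n) (j : Fin m) :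
    0 ≤ xfrac alloc i j := by
  refine div_nonneg (Finset.sum_nonneg fun ℓ _ => ?_) (Nat.cast_nonneg _)
  split_ifs <;> norm_num

lemma allocVal_eq (A : ShareAuction n m h) (i : Fin n) (alloc : Fin m → Fin h → Fin n) :
    allocVal A i alloc = ∑ j, A.v i j * xfrac alloc i j := by
  unfold allocVal xfrac
  refine Finset.sum_congr rfl fun j _ => ?_
  rw [Finset.sum_div, Finset.mul_sum]
  refine Finset.sum_congr rfl fun ℓ _ => ?_
  split_ifs
  · ring
  · ring

/-- Averaged deviation for fixed `ε`. -/
lemma dev_eps (hh : 0 < h) {α : ℝ} (hα : 1 < α)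
    (A : ShareAuction n m h) (σ : MixedProfile n m h) (hNash : IsMixedNash A σ)
    (alloc : Fin m → Fin h → Fin n) (i : Fin n) (ε : ℝ) (hε : 0 < ε)
    (hbud : ∑ j ∈ Jset A σ α i, xfrac alloc i j * (pbar A σ α j + h * ε) ≤ A.B i) :
    ∑ j ∈ Jset A σ α i, xfrac alloc i j *
        ((1 - 1 / α) * (A.v i j - pbar A σ α j) - h * ε) ≤
      ∑ j, A.v i j * q A σ i j := by
  classical
  haveI : NeZero h := ⟨hh.ne'⟩
  have hhR : (0:ℝ) < h := by exact_mod_cast hh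
  have hα0 : 0 < α := by linarith
  set c : Fin m → ℝ := fun j => pbar A σ α j / h with hc
  have hc0 : ∀ j, 0 ≤ c j := fun j => div_nonneg (pbar_nonneg A σ hα0.le j) hhR.le
  let S : Fin h → Fin m → Fin h → Prop := fun s j ℓ => j ∈ Jset A σ α i ∧ alloc j (ℓ + s) = i
  have hS : ∀ s j ℓ, S s j ℓ → c j ≤ A.v i j / h := by
    intro s j ℓ hs
    have := hs.1
    simp only [Jset, mem_filter, mem_univ, true_and] at this
    exact div_le_div_of_nonneg_right this hhR.le
  have hind : ∀ s j ℓ, (if S s j ℓ then (1:ℝ) else 0) =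
      if j ∈ Jset A σ α i then (if alloc j (ℓ + s) = i then (1:ℝ) else 0) else 0 := by
    intro s j ℓ
    by_cases h1 : j ∈ Jset A σ α i <;> by_cases h2 : alloc j (ℓ + s) = i <;> simp [S, h1, h2]
  have hx : ∀ j, (∑ ℓ : Fin h, if alloc j ℓ = i then (1 : ℝ) else 0) = h * xfrac alloc i j := by
    intro j; unfold xfrac; field_simp
  have hshift : ∀ j (s : Fin h), (∑ ℓ : Fin h, if alloc j (ℓ + s) = i then (1 : ℝ) else 0)
      = h * xfrac alloc i j := by
    intro j s
    rw [← hx]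
    exact Equiv.sum_comp (Equiv.addRight s) (fun ℓ => if alloc j ℓ = i then (1:ℝ) else 0)
  have hshift' : ∀ j (ℓ : Fin h), (∑ s : Fin h, if alloc j (ℓ + s) = i then (1 : ℝ) else 0)
      = h * xfrac alloc i j := by
    intro j ℓ
    rw [← hx]
    exact Equiv.sum_comp (Equiv.addLeft ℓ) (fun ℓ => if alloc j ℓ = i then (1:ℝ) else 0)
  have key : ∀ s : Fin h, ∑ j, ∑ ℓ, (if S s j ℓ then (1:ℝ) else 0) *
      ((A.v i j / h - c j) * (1 - ebid A σ j ℓ / (c j + ε)) - ε) ≤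
      ∑ j, A.v i j * q A σ i j := by
    intro s
    refine (dev_expect hh A σ i c ε hε (S s) hc0 (hS s)).trans
      (le_trans ?_ (expect_util_le A σ i))
    refine hNash.2 i _ ?_ ?_
    · intro j ℓ
      have := hc0 j
      split_ifs <;> linarith
    · refine le_trans (le_of_eq ?_) hbud
      rw [← Finset.sum_filter_add_sum_filter_not univ (fun j => j ∈ Jset A σ α i)]
      have z : ∑ j ∈ univ.filter (fun j => ¬ j ∈ Jset A σ α i),
          ∑ ℓ, (if S s j ℓ then c j + ε else 0) = 0 := by
        refine Finset.sum_eq_zero fun j hj => Finset.sum_eq_zero fun ℓ _ => ?_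
        rw [if_neg]
        intro hs
        exact (Finset.mem_filter.1 hj).2 hs.1
      rw [z, add_zero, Finset.filter_univ_mem]
      refine Finset.sum_congr rfl fun j hj => ?_
      have : ∀ ℓ, (if S s j ℓ then c j + ε else 0) =
          (if alloc j (ℓ + s) = i then (1:ℝ) else 0) * (c j + ε) := by
        intro ℓ
        by_cases h2 : alloc j (ℓ + s) = i <;> simp [S, hj, h2]
      simp_rw [this]
      rw [← Finset.sum_mul, hshift]
      simp only [hc]
      field_simp
  have hsum := Finset.sum_le_sum fun s (_ : s ∈ (univ : Finset (Fin h))) => key s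
  rw [Finset.sum_const, Finset.card_univ, Fintype.card_fin, nsmul_eq_mul] at hsum
  refine le_of_mul_le_mul_left (le_trans ?_ hsum) hhR
  rw [Finset.sum_comm, Finset.mul_sum,
    ← Finset.sum_filter_add_sum_filter_not univ (fun j => j ∈ Jset A σ α i)]
  have z : ∑ j ∈ univ.filter (fun j => ¬ j ∈ Jset A σ α i), ∑ s : Fin h,
      ∑ ℓ, (if S s j ℓ then (1:ℝ) else 0) *
      ((A.v i j / h - c j) * (1 - ebid A σ j ℓ / (c j + ε)) - ε) = 0 := by
    refine Finset.sum_eq_zero fun j hj => Finset.sum_eq_zero fun s _ =>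
      Finset.sum_eq_zero fun ℓ _ => ?_
    rw [if_neg, zero_mul]
    intro hs
    exact (Finset.mem_filter.1 hj).2 hs.1
  rw [z, add_zero, Finset.filter_univ_mem]
  refine Finset.sum_le_sum fun j hj => ?_
  simp_rw [hind, if_pos hj]
  rw [Finset.sum_comm]
  simp_rw [← Finset.sum_mul, hshift']
  rw [← Finset.mul_sum, Finset.sum_sub_distrib, ← Finset.mul_sum, Finset.sum_sub_distrib,
    ← Finset.sum_div]
  simp only [Finset.sum_const, Finset.card_univ, Fintype.card_fin, nsmul_eq_mul, mul_one]
  have hE : ∑ ℓ, ebid A σ j ℓ = h * c j / α := by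
    simp only [hc, pbar_eq]; field_simp
  have hjv : pbar A σ α j ≤ A.v i j := by
    simpa only [Jset, mem_filter, mem_univ, true_and] using hj
  have hpc : pbar A σ α j = h * c j := by simp only [hc]; field_simp
  have hpos : 0 < c j + ε := by linarith [hc0 j]
  have hle : (∑ ℓ, ebid A σ j ℓ) / (c j + ε) ≤ h / α := by
    rw [hE, div_le_div_iff₀ hpos hα0, div_mul_cancel₀ _ hα0.ne']
    nlinarith
  have hd : 0 ≤ A.v i j / h - c j := by
    rw [sub_nonneg, le_div_iff₀ hhR]; linarith
  have e : (A.v i j - pbar A σ α j) = h * (A.v i j / h - c j) := by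
    rw [hpc]; field_simp
  rw [e, ← mul_assoc]
  refine mul_le_mul_of_nonneg_left ?_ (mul_nonneg hhR.le (xfrac_nonneg alloc i j))
  have := mul_le_mul_of_nonneg_left hle hd
  have e2 : (1 - 1 / α) * (h * (A.v i j / h - c j)) =
    (A.v i j / h - c j) * h - (A.v i j / h - c j) * (h / α) := by ring
  rw [e2]
  linarith

/-- Per-bidder bound. -/
lemma dev_bound (hh : 0 < h) {α : ℝ} (hα : 1 < α)
    (A : ShareAuction n m h) (σ : MixedProfile n m h) (hNash : IsMixedNash A σ)
    (alloc : Fin m → Fin h → Fin n) (i : Fin n) :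
    (1 - 1 / α) * (min (allocVal A i alloc) (A.B i) - ∑ j, pbar A σ α j * xfrac alloc i j) ≤
      ∑ j, A.v i j * q A σ i j := by
  classical
  have hhR : (0:ℝ) < h := by exact_mod_cast hh
  have hα0 : 0 < α := by linarith
  have hk : 0 ≤ 1 - 1 / α := by
    rw [sub_nonneg, div_le_one hα0]; exact hα.le
  have hW : 0 ≤ ∑ j, A.v i j * q A σ i j :=
    Finset.sum_nonneg fun j _ => mul_nonneg (A.v_nonneg i j) (q_nonneg A σ i j)
  have hpx : ∀ j, 0 ≤ pbar A σ α j * xfrac alloc i j := fun j =>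
    mul_nonneg (pbar_nonneg A σ hα0.le j) (xfrac_nonneg alloc i j)
  by_cases hb : A.B i ≤ ∑ j, pbar A σ α j * xfrac alloc i j
  · have : min (allocVal A i alloc) (A.B i) - ∑ j, pbar A σ α j * xfrac alloc i j ≤ 0 := by
      linarith [min_le_right (allocVal A i alloc) (A.B i)]
    nlinarith
  push Not at hb
  have h1 : min (allocVal A i alloc) (A.B i) - ∑ j, pbar A σ α j * xfrac alloc i j ≤
      ∑ j ∈ Jset A σ α i, xfrac alloc i j * (A.v i j - pbar A σ α j) := by
    refine le_trans (sub_le_sub_right (min_le_left _ _) _) ?_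
    rw [allocVal_eq, ← Finset.sum_sub_distrib, Jset, Finset.sum_filter]
    refine Finset.sum_le_sum fun j _ => ?_
    have := xfrac_nonneg alloc i j
    split_ifs with hj
    · linarith
    · push Not at hj
      nlinarith
  refine le_trans (mul_le_mul_of_nonneg_left h1 hk) ?_
  set X := ∑ j ∈ Jset A σ α i, xfrac alloc i j with hX
  have hX0 : 0 ≤ X := Finset.sum_nonneg fun j _ => xfrac_nonneg alloc i j
  have hPJ : ∑ j ∈ Jset A σ α i, xfrac alloc i j * pbar A σ α j ≤
      ∑ j, pbar A σ α j * xfrac alloc i j := by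
    simp_rw [mul_comm (xfrac alloc i _)]
    exact Finset.sum_le_sum_of_subset_of_nonneg (Finset.subset_univ _) fun j _ _ => hpx j
  have heps : ∀ ε : ℝ, 0 < ε → X * (h * ε) ≤ A.B i - ∑ j, pbar A σ α j * xfrac alloc i j →
      (1 - 1 / α) * (∑ j ∈ Jset A σ α i, xfrac alloc i j * (A.v i j - pbar A σ α j))
        - X * (h * ε) ≤ ∑ j, A.v i j * q A σ i j := by
    intro ε hε hle
    refine le_trans (le_of_eq ?_) (dev_eps hh hα A σ hNash alloc i ε hε ?_)
    · rw [hX, Finset.mul_sum, Finset.sum_mul, ← Finset.sum_sub_distrib]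
      refine Finset.sum_congr rfl fun j _ => ?_
      ring
    · simp_rw [mul_add]
      rw [Finset.sum_add_distrib, ← Finset.sum_mul, ← hX]
      linarith
  refine le_of_forall_pos_le_add fun δ hδ => ?_
  set d := min δ (A.B i - ∑ j, pbar A σ α j * xfrac alloc i j) with hd
  have hd0 : 0 < d := lt_min hδ (by linarith)
  have hY : 0 < X * h + 1 := by positivity
  have hsm : X * (h * (d / (X * h + 1))) ≤ d := by
    have : X * (h * (d / (X * h + 1))) = d * (X * h) / (X * h + 1) := by ring
    rw [this, div_le_iff₀ hY]
    nlinarith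
  have := heps (d / (X * h + 1)) (by positivity) (hsm.trans (min_le_right _ _))
  have := hsm.trans (min_le_left _ _)
  linarith

end LLPAux


/-- **LLP deviations lemma**: bidders in `I` derive large value at equilibrium.
For every allocation (in particular an optimal one, whose Liquid Welfare is `OPT`),
`Σ_{i∈I} Σ_j v_{ij} q_{ij} ≥ (1/2 − 1/(2α)) (OPT − α(1 + γ + n/h) REV(σ) − Σ_{i∈Ī₃} B_i)`. -/
theorem llp_deviations {n m h : ℕ} (hh : 0 < h)
    (α γ : ℝ) (hα : 1 < α) (hγ : 1 < γ)
    (A : ShareAuction n m h) (σ : MixedProfile n m h) (hNash : IsMixedNash A σ)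
    (alloc : Fin m → Fin h → Fin n) :
    ∑ i ∈ Iset A σ α γ, ∑ j : Fin m, A.v i j * q A σ i j ≥
      (1 / 2 - 1 / (2 * α)) *
        ((∑ i, min (allocVal A i alloc) (A.B i))
          - α * (1 + γ + (n : ℝ) / (h : ℝ)) * REV A σ α
          - ∑ i ∈ univ \ I3 A σ γ, A.B i) := by
  classical
  have hhR : (0:ℝ) < h := by exact_mod_cast hh
  have hα0 : 0 < α := by linarith
  set κ : ℝ := 1 / 2 - 1 / (2 * α) with hκ
  have hκ2 : 1 - 1 / α = 2 * κ := by rw [hκ]; field_simp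
  have hκ0 : 0 ≤ κ := by
    have : 1 / α ≤ 1 := by rw [div_le_one hα0]; exact hα.le
    linarith
  have hp0 : ∀ j, 0 ≤ pbar A σ α j := fun j => LLPAux.pbar_nonneg A σ hα0.le j
  have hq0 : ∀ i j, 0 ≤ q A σ i j := fun i j => LLPAux.q_nonneg A σ i j
  have hx0 : ∀ i j, 0 ≤ LLPAux.xfrac alloc i j := fun i j => LLPAux.xfrac_nonneg alloc i j
  have hW : ∀ i, 0 ≤ ∑ j, A.v i j * q A σ i j := fun i =>
    Finset.sum_nonneg fun j _ => mul_nonneg (A.v_nonneg i j) (hq0 i j)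
  set R := ∑ j, pbar A σ α j with hR
  have hREV : α * (1 + γ + (n : ℝ) / (h : ℝ)) * REV A σ α = (1 + γ + (n : ℝ) / (h : ℝ)) * R := by
    unfold REV; rw [← hR]; field_simp
  have hR0 : 0 ≤ R := Finset.sum_nonneg fun j _ => hp0 j
  have per : ∀ i, κ * (min (allocVal A i alloc) (A.B i)
      - ∑ j, pbar A σ α j * LLPAux.xfrac alloc i j
      - γ * ∑ j, pbar A σ α j * q A σ i j - R / h
      - (if i ∈ univ \ I3 A σ γ then A.B i else 0)) ≤
      if i ∈ Iset A σ α γ then ∑ j, A.v i j * q A σ i j else 0 := by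
    intro i
    have t1 : 0 ≤ ∑ j, pbar A σ α j * LLPAux.xfrac alloc i j :=
      Finset.sum_nonneg fun j _ => mul_nonneg (hp0 j) (hx0 i j)
    have t2 : 0 ≤ γ * ∑ j, pbar A σ α j * q A σ i j :=
      mul_nonneg (by linarith) (Finset.sum_nonneg fun j _ => mul_nonneg (hp0 j) (hq0 i j))
    have t3 : 0 ≤ R / h := by positivity
    have t4 : 0 ≤ (if i ∈ univ \ I3 A σ γ then A.B i else 0) := by
      split_ifs
      · exact A.B_nonneg i
      · exact le_rfl
    have t5 := min_le_right (allocVal A i alloc) (A.B i)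
    by_cases hi : i ∈ Iset A σ α γ
    · rw [if_pos hi]
      have hb := LLPAux.dev_bound hh hα A σ hNash alloc i
      rw [hκ2] at hb
      have := mul_nonneg hκ0 t2
      have := mul_nonneg hκ0 t3
      have := mul_nonneg hκ0 t4
      have := hW i
      nlinarith
    · rw [if_neg hi]
      refine mul_nonpos_of_nonneg_of_nonpos hκ0 ?_
      by_cases h3 : i ∈ I3 A σ γ
      · by_cases h2 : i ∈ I2 A σ α
        · have h1 : i ∉ I1 A σ α γ := fun h1 => hi (by simp [Iset, h1, h2, h3])
          simp only [I1, mem_filter, mem_univ, true_and, not_le] at h1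
          have : ∑ j ∈ Jset A σ α i, pbar A σ α j * q A σ i j ≤
              ∑ j, pbar A σ α j * q A σ i j :=
            Finset.sum_le_sum_of_subset_of_nonneg (Finset.subset_univ _)
              fun j _ _ => mul_nonneg (hp0 j) (hq0 i j)
          have := mul_le_mul_of_nonneg_left this (show 0 ≤ γ by linarith)
          linarith
        · simp only [I2, mem_filter, mem_univ, true_and, not_le] at h2
          rw [← Finset.sum_div, ← hR] at h2
          linarith
      · have : (if i ∈ univ \ I3 A σ γ then A.B i else 0) = A.B i := by
          rw [if_pos]; simp [h3]
        linarith
  have tot := Finset.sum_le_sum fun i (_ : i ∈ (univ : Finset (Fin n))) => per i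
  rw [← Finset.mul_sum] at tot
  simp only [Finset.sum_sub_distrib] at tot
  rw [Finset.sum_ite_mem, Finset.sum_ite_mem, Finset.univ_inter, Finset.univ_inter] at tot
  have s1 : ∑ i, ∑ j, pbar A σ α j * LLPAux.xfrac alloc i j = R := by
    rw [Finset.sum_comm]
    refine Finset.sum_congr rfl fun j _ => ?_
    rw [← Finset.mul_sum]
    have := LLPAux.frac_sum hh (alloc j)
    unfold LLPAux.xfrac
    rw [this, mul_one]
  have s2 : ∑ i, γ * ∑ j, pbar A σ α j * q A σ i j = γ * R := by
    rw [← Finset.mul_sum, Finset.sum_comm]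
    congr 1
    refine Finset.sum_congr rfl fun j _ => ?_
    rw [← Finset.mul_sum, LLPAux.q_sum hh, mul_one]
  have s3 : ∑ _i : Fin n, R / (h:ℝ) = (n:ℝ) / h * R := by
    simp; ring
  rw [s1, s2, s3] at tot
  rw [hREV]
  refine ge_iff_le.2 (le_trans (le_of_eq ?_) tot)
  ring
end

section
/- (γ-boosting deviation lemma) In the share-model simultaneous first price auction with a mixed Nash equilibrium σ and parameters α > 1, γ > 1, the value derived by bidders in I is comparable to the Liquid Welfare at equilibrium: (1 − 2α/(γ(α−1))) · Σ_{i∈I} Σ_{j=1}^m v_{ij}·q_{ij} ≤ α·REV(σ) + 2·LW(σ) − (1/γ)·Σ_{i∈Ī₃} B_i. -/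
/-!
Share-model simultaneous first price auction with `n` additive budgeted bidders,
`m` items, each divided into `h` identical shares.  Main theorem: for every mixed
Nash equilibrium `σ`, the optimal Liquid Welfare is at most `51.5` times the
expected Liquid Welfare at equilibrium, provided `h ≥ n ≥ 0` and `h ≥ 1`.
-/

open Finset

namespace GBD

variable {n m h : ℕ}

lemma prob_nonneg (σ : MixedProfile n m h) (ω : ∀ i, Fin (σ.K i)) : 0 ≤ σ.prob ω :=
  Finset.prod_nonneg fun i _ => σ.p_nonneg i _

lemma prob_sum (σ : MixedProfile n m h) : ∑ ω : ∀ i, Fin (σ.K i), σ.prob ω = 1 := by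
  have := Finset.prod_univ_sum (fun i : Fin n => (univ : Finset (Fin (σ.K i)))) (fun i k => σ.p i k)
  rw [Fintype.piFinset_univ] at this
  simp only [σ.p_sum, Finset.prod_const_one] at this
  exact this.symm

lemma exists_subset (w : Fin h → ℝ) (k : ℕ) (hk : k ≤ h) :
    ∃ T : Finset (Fin h), T.card = k ∧ (k : ℝ) * ∑ ℓ, w ℓ ≤ h * ∑ ℓ ∈ T, w ℓ := by
  obtain ⟨d, hd⟩ := Nat.exists_eq_add_of_le hk
  induction d generalizing k with
  | zero => exact ⟨univ, by simp [hd], by simp [hd]⟩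
  | succ d ih =>
    obtain ⟨T, hT, hs⟩ := ih (k + 1) (by omega) (by omega)
    have hne : T.Nonempty := by rw [← Finset.card_pos]; omega
    obtain ⟨a, ha, hmin⟩ := T.exists_min_image w hne
    refine ⟨T.erase a, by rw [Finset.card_erase_of_mem ha, hT]; rfl, ?_⟩
    have h1 : w a + ∑ ℓ ∈ T.erase a, w ℓ = ∑ ℓ ∈ T, w ℓ := Finset.add_sum_erase T w ha
    have h2 : (T.card : ℝ) * w a ≤ ∑ ℓ ∈ T, w ℓ := by
      have := Finset.card_nsmul_le_sum T w (w a) hmin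
      simpa using this
    rw [hT] at h2
    push_cast at h2 hs
    have hk1 : (0:ℝ) < k + 1 := by positivity
    have hh0 : (0:ℝ) ≤ h := by positivity
    have hk0 : (0:ℝ) ≤ k := by positivity
    refine le_of_mul_le_mul_left ?_ hk1
    have e : ∑ ℓ ∈ T.erase a, w ℓ = ∑ ℓ ∈ T, w ℓ - w a := by linarith
    rw [e]
    nlinarith [mul_le_mul_of_nonneg_left hs hk0, mul_le_mul_of_nonneg_left h2 hh0]

lemma wbid_nonneg (A : ShareAuction n m h) (σ : MixedProfile n m h) (ω : ∀ i, Fin (σ.K i))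
    (j : Fin m) (ℓ : Fin h) : 0 ≤ wbid A (σ.bids ω) j ℓ := σ.β_nonneg _ _ _ _

lemma pbar_nonneg (A : ShareAuction n m h) (σ : MixedProfile n m h) {α : ℝ} (hα : 1 < α)
    (j : Fin m) : 0 ≤ pbar A σ α j := by
  unfold pbar MixedProfile.expect
  refine mul_nonneg (by linarith) (Finset.sum_nonneg fun ω _ => mul_nonneg (prob_nonneg σ ω)
    (Finset.sum_nonneg fun ℓ _ => wbid_nonneg A σ ω j ℓ))

lemma util_dev (A : ShareAuction n m h) (i : Fin n) (b : Fin n → Fin m → Fin h → ℝ)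
    (T : Fin m → Finset (Fin h)) (d c : Fin m → ℝ) (ε : ℝ) (hε : 0 ≤ ε)
    (hd : ∀ j, A.v i j / h - d j = c j - ε)
    (hc : ∀ j, (T j).Nonempty → 0 ≤ c j) :
    ∑ j, ∑ ℓ ∈ T j, ((if wbid A b j ℓ < d j then 1 else 0) * c j - ε) ≤
      A.util i (Function.update b i (fun j ℓ => if ℓ ∈ T j then d j else 0)) := by
  unfold ShareAuction.util ShareAuction.val ShareAuction.pay
  rw [← Finset.sum_sub_distrib]
  refine Finset.sum_le_sum fun j _ => ?_
  rw [← Finset.sum_sub_distrib]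
  have hsub : ∑ ℓ ∈ T j, ((if wbid A b j ℓ < d j then 1 else 0) * c j - ε) =
      ∑ ℓ, if ℓ ∈ T j then ((if wbid A b j ℓ < d j then 1 else 0) * c j - ε) else 0 := by
    rw [← Finset.sum_filter]
    simp
  rw [hsub]
  refine Finset.sum_le_sum fun ℓ _ => ?_
  set b' := Function.update b i (fun j ℓ => if ℓ ∈ T j then d j else 0) with hb'
  have hbi : b' i j ℓ = if ℓ ∈ T j then d j else 0 := by simp [hb']
  have hv : 0 ≤ A.v i j / h := div_nonneg (A.v_nonneg i j) (by positivity)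
  by_cases hT : ℓ ∈ T j
  · have hcj := hc j ⟨ℓ, hT⟩
    rw [if_pos hT] at hbi ⊢
    by_cases hw : A.win b' j ℓ = i
    · rw [if_pos hw, if_pos hw, hbi, hd]
      split_ifs <;> linarith
    · rw [if_neg hw, if_neg hw]
      have h1 := A.win_max b' j ℓ i
      have h2 : b' (A.win b' j ℓ) j ℓ = b (A.win b' j ℓ) j ℓ := by
        rw [hb', Function.update_of_ne hw]
      have h3 : b (A.win b' j ℓ) j ℓ ≤ wbid A b j ℓ := A.win_max b j ℓ _
      rw [if_neg (by linarith)]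
      linarith
  · rw [if_neg hT] at hbi ⊢
    by_cases hw : A.win b' j ℓ = i
    · rw [if_pos hw, if_pos hw, hbi]; linarith
    · rw [if_neg hw, if_neg hw]; simp

lemma dev_t (hh : 0 < h) {α : ℝ} (hα : 1 < α)
    (A : ShareAuction n m h) (σ : MixedProfile n m h) (hNash : IsMixedNash A σ) (i : Fin n)
    (k : Fin m → ℕ) (hk : ∀ j, k j ≤ h) (hkv : ∀ j, k j ≠ 0 → pbar A σ α j ≤ A.v i j)
    (t ε : ℝ) (ht : 1 / α < t) (ht1 : t < 1) (hε : 0 < ε)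
    (hB : ∑ j, k j * (t * pbar A σ α j / h + ε) ≤ A.B i) :
    ∑ j, k j * ((1 - 1 / (t * α)) * ((A.v i j - pbar A σ α j) / h) - ε)
      ≤ σ.expect (A.util i) := by
  have hα0 : 0 < α := by linarith
  have hh0 : (0:ℝ) < h := by exact_mod_cast hh
  have ht0 : 0 < t := lt_trans (by positivity) ht
  have htα : 1 < t * α := by rwa [div_lt_iff₀ hα0] at ht
  set P := pbar A σ α with hP
  have hP0 : ∀ j, 0 ≤ P j := fun j => pbar_nonneg A σ hα j
  set d : Fin m → ℝ := fun j => t * P j / h + ε with hd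
  set c : Fin m → ℝ := fun j => (A.v i j - t * P j) / h with hc
  have hdpos : ∀ j, 0 < d j := fun j => by
    have := hP0 j
    simp only [hd]; positivity
  set W : Fin m → Fin h → ℝ := fun j ℓ =>
    ∑ ω : ∀ i, Fin (σ.K i), σ.prob ω * (if wbid A (σ.bids ω) j ℓ < d j then 1 else 0) with hW
  choose T hTc hT using fun j => exists_subset (W j) (k j) (hk j)
  have hWsum : ∀ j, h * (1 - 1 / (t * α)) ≤ ∑ ℓ, W j ℓ := by
    intro j
    have e1 : P j = α * ∑ ℓ, ∑ ω : ∀ i, Fin (σ.K i), σ.prob ω * wbid A (σ.bids ω) j ℓ := by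
      simp only [hP, pbar, MixedProfile.expect]
      rw [Finset.sum_comm]
      simp only [Finset.mul_sum]
    have e2 : ∀ ℓ, d j * (1 - W j ℓ) ≤
        ∑ ω : ∀ i, Fin (σ.K i), σ.prob ω * wbid A (σ.bids ω) j ℓ := by
      intro ℓ
      rw [← prob_sum σ, hW]
      simp only
      rw [← Finset.sum_sub_distrib, Finset.mul_sum]
      refine Finset.sum_le_sum fun ω _ => ?_
      have hp := prob_nonneg σ ω
      have hw := wbid_nonneg A σ ω j ℓ
      split_ifs with hlt
      · simp; positivity
      · push Not at hlt
        nlinarith [mul_le_mul_of_nonneg_left hlt hp]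
    have e3 : d j * (h - ∑ ℓ, W j ℓ) ≤ P j / α := by
      have : d j * (h - ∑ ℓ, W j ℓ) = ∑ ℓ, d j * (1 - W j ℓ) := by
        rw [← Finset.mul_sum, Finset.sum_sub_distrib]; simp
      rw [this, e1, mul_div_cancel_left₀ _ hα0.ne']
      exact Finset.sum_le_sum fun ℓ _ => e2 ℓ
    have e4 : P j / α ≤ d j * (h / (t * α)) := by
      have : d j * (h / (t * α)) = P j / α + ε * (h / (t * α)) := by
        simp only [hd]; field_simp
      rw [this]
      have : 0 < ε * (h / (t * α)) := by positivity
      linarith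
    have e5 := le_of_mul_le_mul_left (e3.trans e4) (hdpos j)
    have : (h:ℝ) * (1 - 1 / (t * α)) = h - h / (t * α) := by ring
    rw [this]; linarith
  have hcnn : ∀ j, k j ≠ 0 → (A.v i j - P j) / h ≤ c j ∧ 0 ≤ (A.v i j - P j) / h := by
    intro j hj
    have h1 := hkv j hj
    have h2 := hP0 j
    refine ⟨?_, div_nonneg (by linarith) hh0.le⟩
    simp only [hc]
    gcongr
    nlinarith
  have hN := hNash.2 i (fun j ℓ => if ℓ ∈ T j then d j else 0)
    (fun j ℓ => by
      split_ifs
      · exact (hdpos j).le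
      · exact le_rfl)
    (by
      refine le_trans (le_of_eq ?_) hB
      refine Finset.sum_congr rfl fun j _ => ?_
      rw [← Finset.sum_filter, Finset.sum_const, nsmul_eq_mul]
      simp [hTc, hd])
  refine le_trans ?_ hN
  have hpt : ∑ ω : ∀ i, Fin (σ.K i), σ.prob ω *
      ∑ j, ∑ ℓ ∈ T j, ((if wbid A (σ.bids ω) j ℓ < d j then 1 else 0) * c j - ε) ≤
      ∑ ω : ∀ i, Fin (σ.K i), σ.prob ω * A.util i (Function.update (σ.bids ω) i
        (fun j ℓ => if ℓ ∈ T j then d j else 0)) := by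
    refine Finset.sum_le_sum fun ω _ => mul_le_mul_of_nonneg_left ?_ (prob_nonneg σ ω)
    refine util_dev A i _ T d c ε hε.le (fun j => by simp only [hd, hc]; ring) (fun j hj => ?_)
    have : k j ≠ 0 := by rw [← hTc j]; exact (Finset.card_pos.mpr hj).ne'
    have := hcnn j this
    linarith
  refine le_trans ?_ hpt
  have hre : ∑ ω : ∀ i, Fin (σ.K i), σ.prob ω *
      ∑ j, ∑ ℓ ∈ T j, ((if wbid A (σ.bids ω) j ℓ < d j then 1 else 0) * c j - ε) =
      ∑ j, ((∑ ℓ ∈ T j, W j ℓ) * c j - k j * ε) := by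
    simp only [Finset.mul_sum]
    rw [Finset.sum_comm]
    refine Finset.sum_congr rfl fun j _ => ?_
    rw [Finset.sum_comm]
    have : (k j : ℝ) * ε = ∑ ℓ ∈ T j, ε := by rw [Finset.sum_const, hTc, nsmul_eq_mul]
    rw [this, Finset.sum_mul, ← Finset.sum_sub_distrib]
    refine Finset.sum_congr rfl fun ℓ _ => ?_
    simp only [hW]
    rw [Finset.sum_mul]
    have hε1 : ε = ∑ ω : ∀ i, Fin (σ.K i), σ.prob ω * ε := by
      rw [← Finset.sum_mul, prob_sum, one_mul]
    conv_rhs => rw [hε1, ← Finset.sum_sub_distrib]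
    refine Finset.sum_congr rfl fun ω _ => by ring
  rw [hre]
  refine Finset.sum_le_sum fun j _ => ?_
  have hpos : 0 ≤ 1 - 1 / (t * α) := by
    have : 1 / (t * α) ≤ 1 := by rw [div_le_one (by positivity)]; exact htα.le
    linarith
  by_cases hj : k j = 0
  · have hTe : T j = ∅ := by rw [← Finset.card_eq_zero, hTc, hj]
    simp [hj, hTe]
  · obtain ⟨h1, h2⟩ := hcnn j hj
    have h3 : (k j : ℝ) * (1 - 1 / (t * α)) ≤ ∑ ℓ ∈ T j, W j ℓ := by
      refine le_of_mul_le_mul_left ?_ hh0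
      have := mul_le_mul_of_nonneg_left (hWsum j) (Nat.cast_nonneg (α := ℝ) (k j))
      calc _ = (k j : ℝ) * (h * (1 - 1 / (t * α))) := by ring
        _ ≤ _ := this.trans (hT j)
    have h4 : (k j : ℝ) * (1 - 1 / (t * α)) * ((A.v i j - P j) / h) ≤ (∑ ℓ ∈ T j, W j ℓ) * c j :=
      mul_le_mul h3 h1 h2 (le_trans (by positivity) h3)
    linarith

lemma dev (hh : 0 < h) {α : ℝ} (hα : 1 < α)
    (A : ShareAuction n m h) (σ : MixedProfile n m h) (hNash : IsMixedNash A σ) (i : Fin n)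
    (k : Fin m → ℕ) (hk : ∀ j, k j ≤ h) (hkv : ∀ j, k j ≠ 0 → pbar A σ α j ≤ A.v i j)
    (hBpos : 0 < A.B i)
    (hB : ∑ j, k j * (pbar A σ α j / h) ≤ A.B i) :
    (1 - 1 / α) * ∑ j, k j * ((A.v i j - pbar A σ α j) / h)
      ≤ σ.expect (A.util i) := by
  have hα0 : 0 < α := by linarith
  set K : ℝ := ∑ j, (k j : ℝ) with hK
  have hK0 : 0 ≤ K := Finset.sum_nonneg fun j _ => by positivity
  set X := ∑ j, k j * ((A.v i j - pbar A σ α j) / h) with hX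
  set C := A.B i / (K + 1) with hC
  have hC0 : 0 < C := by positivity
  have hKC : K * C ≤ A.B i := by
    rw [hC, mul_div_assoc', div_le_iff₀ (by positivity)]; nlinarith
  have key : ∀ t : ℝ, 1 / α < t → t < 1 →
      (1 - 1 / (t * α)) * X - K * ((1 - t) * C) ≤ σ.expect (A.util i) := by
    intro t ht ht1
    have ht0 : 0 < t := lt_trans (by positivity) ht
    have := dev_t hh hα A σ hNash i k hk hkv t ((1 - t) * C) ht ht1
      (mul_pos (by linarith) hC0) (by
        have e : ∑ j, (k j : ℝ) * (t * pbar A σ α j / h + (1 - t) * C) =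
            t * ∑ j, k j * (pbar A σ α j / h) + K * ((1 - t) * C) := by
          rw [Finset.mul_sum, hK, Finset.sum_mul, ← Finset.sum_add_distrib]
          exact Finset.sum_congr rfl fun j _ => by ring
        rw [e]
        nlinarith [mul_le_mul_of_nonneg_left hB ht0.le,
          mul_le_mul_of_nonneg_left hKC (by linarith : 0 ≤ 1 - t)])
    refine le_trans (le_of_eq ?_) this
    rw [hX, hK, Finset.mul_sum, Finset.sum_mul, ← Finset.sum_sub_distrib]
    exact Finset.sum_congr rfl fun j _ => by ring
  have hcont : Filter.Tendsto (fun t : ℝ => (1 - 1 / (t * α)) * X - K * ((1 - t) * C))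
      (nhdsWithin 1 (Set.Iio 1)) (nhds ((1 - 1 / (1 * α)) * X - K * ((1 - 1) * C))) := by
    have : ContinuousAt (fun t : ℝ => (1 - 1 / (t * α)) * X - K * ((1 - t) * C)) 1 := by
      have : (1:ℝ) * α ≠ 0 := by simpa using hα0.ne'
      fun_prop (disch := assumption)
    exact this.tendsto.mono_left nhdsWithin_le_nhds
  have hlim := le_of_tendsto hcont (b := σ.expect (A.util i)) (by
    have h1 : 1 / α < 1 := by rw [div_lt_one hα0]; exact hα
    filter_upwards [Ioo_mem_nhdsLT h1] with t ht
    exact key t ht.1 ht.2)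
  simpa using hlim

/-- Fraction of item `j` won by bidder `i`. -/
noncomputable def frac (A : ShareAuction n m h) (i : Fin n) (j : Fin m)
    (b : Fin n → Fin m → Fin h → ℝ) : ℝ :=
  (∑ ℓ : Fin h, if A.win b j ℓ = i then (1 : ℝ) else 0) / h

lemma frac_nonneg (A : ShareAuction n m h) (i : Fin n) (j : Fin m)
    (b : Fin n → Fin m → Fin h → ℝ) : 0 ≤ frac A i j b := by
  unfold frac
  refine div_nonneg (Finset.sum_nonneg fun ℓ _ => ?_) (by positivity)
  split_ifs <;> norm_num

lemma frac_sum (hh : 0 < h) (A : ShareAuction n m h) (j : Fin m)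
    (b : Fin n → Fin m → Fin h → ℝ) : ∑ i, frac A i j b = 1 := by
  have hh0 : (h:ℝ) ≠ 0 := by exact_mod_cast hh.ne'
  unfold frac
  rw [← Finset.sum_div, Finset.sum_comm]
  simp [hh0]

lemma frac_le_one (hh : 0 < h) (A : ShareAuction n m h) (i : Fin n) (j : Fin m)
    (b : Fin n → Fin m → Fin h → ℝ) : frac A i j b ≤ 1 := by
  rw [← frac_sum hh A j b]
  exact Finset.single_le_sum (f := fun i => frac A i j b)
    (fun i _ => frac_nonneg A i j b) (Finset.mem_univ i)

lemma val_eq (A : ShareAuction n m h) (i : Fin n)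
    (b : Fin n → Fin m → Fin h → ℝ) : A.val i b = ∑ j, A.v i j * frac A i j b := by
  unfold ShareAuction.val frac
  refine Finset.sum_congr rfl fun j _ => ?_
  rw [mul_div_assoc', Finset.mul_sum, Finset.sum_div]
  refine Finset.sum_congr rfl fun ℓ _ => ?_
  split_ifs <;> simp

lemma val_nonneg (A : ShareAuction n m h) (i : Fin n)
    (b : Fin n → Fin m → Fin h → ℝ) : 0 ≤ A.val i b := by
  rw [val_eq]
  exact Finset.sum_nonneg fun j _ => mul_nonneg (A.v_nonneg i j) (frac_nonneg A i j b)

lemma q_eq (A : ShareAuction n m h) (σ : MixedProfile n m h) (i : Fin n) (j : Fin m) :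
    q A σ i j = ∑ ω : ∀ i, Fin (σ.K i), σ.prob ω * frac A i j (σ.bids ω) := rfl

lemma q_nonneg (A : ShareAuction n m h) (σ : MixedProfile n m h) (i : Fin n) (j : Fin m) :
    0 ≤ q A σ i j := by
  rw [q_eq]
  exact Finset.sum_nonneg fun ω _ => mul_nonneg (prob_nonneg σ ω) (frac_nonneg ..)

lemma q_sum (hh : 0 < h) (A : ShareAuction n m h) (σ : MixedProfile n m h) (j : Fin m) :
    ∑ i, q A σ i j = 1 := by
  simp only [q_eq]
  rw [Finset.sum_comm]
  simp only [← Finset.mul_sum, frac_sum hh, mul_one, prob_sum]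

lemma util_le (A : ShareAuction n m h) (σ : MixedProfile n m h) (i : Fin n) :
    σ.expect (A.util i) ≤ ∑ j, A.v i j * q A σ i j := by
  have : ∑ j, A.v i j * q A σ i j = ∑ ω : ∀ i, Fin (σ.K i), σ.prob ω * A.val i (σ.bids ω) := by
    simp only [q_eq, val_eq, Finset.mul_sum]
    rw [Finset.sum_comm]
    exact Finset.sum_congr rfl fun ω _ => Finset.sum_congr rfl fun j _ => by ring
  rw [this]
  refine Finset.sum_le_sum fun ω _ => mul_le_mul_of_nonneg_left ?_ (prob_nonneg σ ω)
  have : 0 ≤ A.pay i (σ.bids ω) := by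
    refine Finset.sum_nonneg fun j _ => Finset.sum_nonneg fun ℓ _ => ?_
    split_ifs
    · exact σ.β_nonneg _ _ _ _
    · exact le_rfl
  unfold ShareAuction.util
  linarith

lemma LW_big (A : ShareAuction n m h) (σ : MixedProfile n m h) (i : Fin n) :
    Qbig A σ i * A.B i ≤ σ.expect (fun b => min (A.val i b) (A.B i)) := by
  unfold Qbig MixedProfile.expect
  rw [Finset.sum_mul]
  refine Finset.sum_le_sum fun ω _ => ?_
  have := prob_nonneg σ ω
  beta_reduce
  split_ifs with hlt
  · rw [min_eq_right hlt]
  · rw [zero_mul]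
    exact mul_nonneg this (le_min (val_nonneg A i _) (A.B_nonneg i))

lemma LW_small (hh : 0 < h) (A : ShareAuction n m h) (σ : MixedProfile n m h) (i : Fin n) {γ : ℝ}
    (hγ : 1 < γ) (hQ : Qbig A σ i ≤ 1 / (2 * γ)) (S : Finset (Fin m))
    (hS : ∀ j ∈ S, 1 / γ < q A σ i j) :
    ∑ j ∈ S, A.v i j * q A σ i j ≤ 2 * σ.expect (fun b => min (A.val i b) (A.B i)) := by
  have h1 : ∀ j ∈ S, q A σ i j ≤ 2 * ∑ ω : ∀ i, Fin (σ.K i), σ.prob ω *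
      (if A.B i ≤ A.val i (σ.bids ω) then 0 else frac A i j (σ.bids ω)) := by
    intro j hj
    have hq := hS j hj
    have : q A σ i j - Qbig A σ i ≤ ∑ ω : ∀ i, Fin (σ.K i), σ.prob ω *
      (if A.B i ≤ A.val i (σ.bids ω) then 0 else frac A i j (σ.bids ω)) := by
      rw [q_eq, Qbig, ← Finset.sum_sub_distrib]
      refine Finset.sum_le_sum fun ω _ => ?_
      have hp := prob_nonneg σ ω
      have hf := frac_le_one hh A i j (σ.bids ω)
      split_ifs
      · nlinarith
      · linarith
    have e : 1 / (2 * γ) = (1 / γ) / 2 := by field_simp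
    linarith
  calc ∑ j ∈ S, A.v i j * q A σ i j
      ≤ ∑ j ∈ S, A.v i j * (2 * ∑ ω : ∀ i, Fin (σ.K i), σ.prob ω *
      (if A.B i ≤ A.val i (σ.bids ω) then 0 else frac A i j (σ.bids ω))) :=
        Finset.sum_le_sum fun j hj => mul_le_mul_of_nonneg_left (h1 j hj) (A.v_nonneg i j)
    _ = 2 * ∑ ω : ∀ i, Fin (σ.K i), σ.prob ω * ∑ j ∈ S, A.v i j *
      (if A.B i ≤ A.val i (σ.bids ω) then 0 else frac A i j (σ.bids ω)) := by
        simp only [Finset.mul_sum]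
        rw [Finset.sum_comm]
        exact Finset.sum_congr rfl fun ω _ => Finset.sum_congr rfl fun j _ => by ring
    _ ≤ _ := by
        unfold MixedProfile.expect
        refine mul_le_mul_of_nonneg_left (Finset.sum_le_sum fun ω _ =>
          mul_le_mul_of_nonneg_left ?_ (prob_nonneg σ ω)) (by norm_num)
        beta_reduce
        split_ifs with hlt
        · simp only [mul_zero, Finset.sum_const_zero]
          exact le_min (val_nonneg A i _) (A.B_nonneg i)
        · rw [min_eq_left (not_le.mp hlt).le, val_eq]
          exact Finset.sum_le_sum_of_subset_of_nonneg (Finset.subset_univ S)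
            fun j _ _ => mul_nonneg (A.v_nonneg i j) (frac_nonneg ..)

lemma boost (hh : 0 < h) {α γ : ℝ} (hα : 1 < α) (hγ : 1 < γ)
    (A : ShareAuction n m h) (σ : MixedProfile n m h) (hNash : IsMixedNash A σ) (i : Fin n)
    (hi : i ∈ Iset A σ α γ) :
    ∑ j ∈ (Jset A σ α i).filter (fun j => q A σ i j ≤ 1 / γ),
      (A.v i j - pbar A σ α j) * q A σ i j ≤ 2 * α / (γ * (α - 1)) * σ.expect (A.util i) := by
  have hα0 : 0 < α := by linarith
  have hγ0 : 0 < γ := by linarith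
  have hh0 : (0:ℝ) < h := by exact_mod_cast hh
  simp only [Iset, I1, I2, I3, Finset.mem_inter, Finset.mem_filter, Finset.mem_univ,
    true_and] at hi
  obtain ⟨⟨h1, h2⟩, h3⟩ := hi
  have hBpos : 0 < A.B i := by
    refine lt_of_le_of_ne (A.B_nonneg i) fun h0 => ?_
    have : Qbig A σ i = 1 := by
      unfold Qbig
      rw [← prob_sum σ]
      refine Finset.sum_congr rfl fun ω _ => ?_
      rw [if_pos]; rw [← h0]; exact val_nonneg A i _
    rw [this, le_div_iff₀ (by positivity)] at h3
    linarith
  set P := pbar A σ α with hP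
  have hP0 : ∀ j, 0 ≤ P j := fun j => pbar_nonneg A σ hα j
  have hq0 : ∀ j, 0 ≤ q A σ i j := q_nonneg A σ i
  set S := (Jset A σ α i).filter (fun j => q A σ i j ≤ 1 / γ) with hS
  have hSJ : ∀ j ∈ S, P j ≤ A.v i j := fun j hj => by
    simp only [hS, Jset, Finset.mem_filter, Finset.mem_univ, true_and] at hj
    exact hj.1
  have hSq : ∀ j ∈ S, γ * q A σ i j ≤ 1 := fun j hj => by
    simp only [hS, Finset.mem_filter] at hj
    have := hj.2
    rw [le_div_iff₀ hγ0] at this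
    linarith
  have conv : ∀ (g : Fin m → ℕ) (f : Fin m → ℝ),
      ∑ j, ((if j ∈ S then g j else 0 : ℕ) : ℝ) * f j = ∑ j ∈ S, g j * f j := by
    intro g f
    rw [← Finset.sum_subset (Finset.subset_univ S)]
    · exact Finset.sum_congr rfl fun j hj => by simp [hj]
    · intro j _ hj; simp [hj]
  have hA := dev hh hα A σ hNash i (fun j => if j ∈ S then ⌊γ * q A σ i j * h⌋₊ else 0)
    (fun j => by
      split_ifs with hj
      · refine Nat.floor_le_of_le ?_
        nlinarith [hSq j hj]
      · omega)
    (fun j hj => by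
      by_cases hjS : j ∈ S
      · exact hSJ j hjS
      · simp [hjS] at hj) hBpos (by
      rw [conv (fun j => ⌊γ * q A σ i j * h⌋₊)]
      refine le_trans ?_ h1
      rw [Finset.mul_sum]
      calc _ ≤ ∑ j ∈ S, γ * (P j * q A σ i j) := by
            refine Finset.sum_le_sum fun j _ => ?_
            have : (⌊γ * q A σ i j * h⌋₊ : ℝ) ≤ γ * q A σ i j * h :=
              Nat.floor_le (by have := hq0 j; positivity)
            calc _ ≤ γ * q A σ i j * h * (P j / h) :=
                  mul_le_mul_of_nonneg_right this (div_nonneg (hP0 j) hh0.le)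
              _ = _ := by field_simp
        _ ≤ _ := Finset.sum_le_sum_of_subset_of_nonneg (Finset.filter_subset _ _)
            fun j _ _ => mul_nonneg hγ0.le (mul_nonneg (hP0 j) (hq0 j)))
  have hB := dev hh hα A σ hNash i (fun j => if j ∈ S then 1 else 0)
    (fun j => by
      split_ifs <;> omega)
    (fun j hj => by
      by_cases hjS : j ∈ S
      · exact hSJ j hjS
      · simp [hjS] at hj) hBpos (by
      rw [conv (fun j => 1)]
      refine le_trans ?_ h2
      simp only [Nat.cast_one, one_mul]
      exact Finset.sum_le_sum_of_subset_of_nonneg (Finset.subset_univ S)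
            fun j _ _ => div_nonneg (hP0 j) hh0.le)
  rw [conv (fun j => ⌊γ * q A σ i j * h⌋₊)] at hA
  rw [conv (fun j => 1)] at hB
  have hsum : γ * ∑ j ∈ S, (A.v i j - P j) * q A σ i j ≤
      ∑ j ∈ S, (⌊γ * q A σ i j * h⌋₊ : ℝ) * ((A.v i j - P j) / h) +
      ∑ j ∈ S, ((1:ℕ) : ℝ) * ((A.v i j - P j) / h) := by
    rw [← Finset.sum_add_distrib, Finset.mul_sum]
    refine Finset.sum_le_sum fun j hj => ?_
    have hf := (Nat.lt_floor_add_one (γ * q A σ i j * h)).le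
    have hnn : 0 ≤ (A.v i j - P j) / h := div_nonneg (by linarith [hSJ j hj]) hh0.le
    calc _ = γ * q A σ i j * h * ((A.v i j - P j) / h) := by field_simp
      _ ≤ (⌊γ * q A σ i j * h⌋₊ + 1) * ((A.v i j - P j) / h) :=
        mul_le_mul_of_nonneg_right hf hnn
      _ = _ := by push_cast; ring
  have ha : 0 < 1 - 1 / α := by
    have : 1 / α < 1 := by rw [div_lt_one hα0]; exact hα
    linarith
  have hfin := mul_le_mul_of_nonneg_left hsum ha.le
  have hfin2 : (1 - 1 / α) * γ * ∑ j ∈ S, (A.v i j - P j) * q A σ i j ≤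
      2 * σ.expect (A.util i) := by linarith
  have hα1 : 0 < α - 1 := by linarith
  have e : 2 * α / (γ * (α - 1)) * σ.expect (A.util i) =
      2 * σ.expect (A.util i) / ((1 - 1 / α) * γ) := by
    have : 1 - 1 / α = (α - 1) / α := by field_simp
    rw [this]; field_simp
  rw [e, le_div_iff₀ (by positivity)]
  linarith

lemma per_bidder (hh : 0 < h) {α γ : ℝ} (hα : 1 < α) (hγ : 1 < γ)
    (A : ShareAuction n m h) (σ : MixedProfile n m h) (hNash : IsMixedNash A σ) (i : Fin n)
    (hi : i ∈ Iset A σ α γ) :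
    (1 - 2 * α / (γ * (α - 1))) * ∑ j, A.v i j * q A σ i j ≤
      ∑ j, pbar A σ α j * q A σ i j +
      2 * σ.expect (fun b => min (A.val i b) (A.B i)) := by
  have hb := boost hh hα hγ A σ hNash i hi
  have hu := util_le A σ i
  have hQ : Qbig A σ i ≤ 1 / (2 * γ) := by
    simp only [Iset, I3, Finset.mem_inter, Finset.mem_filter, Finset.mem_univ,
      true_and] at hi
    exact hi.2
  have hL := LW_small hh A σ i hγ hQ (univ.filter fun j => 1 / γ < q A σ i j)
    (fun j hj => by simpa using hj)
  have hc : 0 ≤ 2 * α / (γ * (α - 1)) :=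
    div_nonneg (by linarith) (mul_nonneg (by linarith) (by linarith))
  have hb2 := hb.trans (mul_le_mul_of_nonneg_left hu hc)
  have hdec : ∑ j, A.v i j * q A σ i j ≤ ∑ j, pbar A σ α j * q A σ i j +
      ∑ j ∈ (Jset A σ α i).filter (fun j => q A σ i j ≤ 1 / γ),
        (A.v i j - pbar A σ α j) * q A σ i j +
      ∑ j ∈ univ.filter (fun j => 1 / γ < q A σ i j), A.v i j * q A σ i j := by
    rw [Jset, Finset.filter_filter, Finset.sum_filter, Finset.sum_filter,
      ← Finset.sum_add_distrib, ← Finset.sum_add_distrib]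
    refine Finset.sum_le_sum fun j _ => ?_
    have h1 := pbar_nonneg A σ hα j
    have h2 := q_nonneg A σ i j
    have h3 := A.v_nonneg i j
    have h4 := mul_nonneg h1 h2
    by_cases hq : q A σ i j ≤ 1 / γ
    · rw [if_neg (not_lt.mpr hq)]
      by_cases hp : pbar A σ α j ≤ A.v i j
      · rw [if_pos ⟨hp, hq⟩]; linarith
      · rw [if_neg (fun hx => hp hx.1)]
        have := mul_le_mul_of_nonneg_right (not_le.mp hp).le h2
        linarith
    · rw [if_pos (not_le.mp hq), if_neg (fun hx => hq hx.2)]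
      linarith
  linarith

end GBD

/-- **γ-boosting deviation lemma**: the value derived by bidders in `I` is
comparable to the expected Liquid Welfare at equilibrium:
`(1 − 2α/(γ(α−1))) Σ_{i∈I} Σ_j v_{ij} q_{ij} ≤ α REV(σ) + 2 LW(σ) − (1/γ) Σ_{i∈Ī₃} B_i`. -/
theorem gamma_boosting_deviation {n m h : ℕ} (hh : 0 < h)
    (α γ : ℝ) (hα : 1 < α) (hγ : 1 < γ)
    (A : ShareAuction n m h) (σ : MixedProfile n m h) (hNash : IsMixedNash A σ) :
    (1 - 2 * α / (γ * (α - 1))) *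
        ∑ i ∈ Iset A σ α γ, ∑ j : Fin m, A.v i j * q A σ i j ≤
      α * REV A σ α + 2 * LW A σ - (1 / γ) * ∑ i ∈ univ \ I3 A σ γ, A.B i := by
  have hα0 : 0 < α := by linarith
  have hγ0 : 0 < γ := by linarith
  set L : Fin n → ℝ := fun i => σ.expect (fun b => min (A.val i b) (A.B i)) with hL
  have h1 := Finset.sum_le_sum fun i hi => GBD.per_bidder hh hα hγ A σ hNash i hi
  rw [← Finset.mul_sum, Finset.sum_add_distrib, ← Finset.mul_sum] at h1
  have h2 : ∑ i ∈ Iset A σ α γ, ∑ j, pbar A σ α j * q A σ i j ≤ α * REV A σ α := by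
    have e : α * REV A σ α = ∑ i, ∑ j, pbar A σ α j * q A σ i j := by
      rw [REV, Finset.sum_comm]
      simp only [← Finset.mul_sum, GBD.q_sum hh, mul_one]
      field_simp
    rw [e]
    exact Finset.sum_le_sum_of_subset_of_nonneg (Finset.subset_univ _) fun i _ _ =>
      Finset.sum_nonneg fun j _ => mul_nonneg (GBD.pbar_nonneg A σ hα j) (GBD.q_nonneg A σ i j)
  have hL0 : ∀ i, 0 ≤ L i := fun i =>
    Finset.sum_nonneg fun ω _ => mul_nonneg (GBD.prob_nonneg σ ω)
      (le_min (GBD.val_nonneg A i _) (A.B_nonneg i))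
  have h3 : (1 / γ) * ∑ i ∈ univ \ I3 A σ γ, A.B i ≤ 2 * ∑ i ∈ univ \ I3 A σ γ, L i := by
    rw [Finset.mul_sum, Finset.mul_sum]
    refine Finset.sum_le_sum fun i hi => ?_
    have hQ : 1 / (2 * γ) < Qbig A σ i := by
      simpa [I3] using hi
    have hb := (mul_le_mul_of_nonneg_right hQ.le (A.B_nonneg i)).trans (GBD.LW_big A σ i)
    have e : 1 / (2 * γ) = (1 / γ) / 2 := by field_simp
    rw [e] at hb
    simp only [hL]
    linarith
  have h4 : ∑ i ∈ Iset A σ α γ, L i + ∑ i ∈ univ \ I3 A σ γ, L i ≤ LW A σ := by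
    have hd : Disjoint (Iset A σ α γ) (univ \ I3 A σ γ) := by
      rw [Finset.disjoint_left]
      intro i hi hi'
      exact (Finset.mem_sdiff.mp hi').2 (Finset.mem_inter.mp hi).2
    rw [← Finset.sum_union hd]
    exact Finset.sum_le_sum_of_subset_of_nonneg (Finset.subset_univ _) fun i _ _ => hL0 i
  linarith
end

section
/- Consider a simultaneous first price auction where every bidder has a fractionally subadditive (XOS) valuation and a budget. If b is a pure Nash equilibrium (against all deviations whose bids sum to at most the deviator's budget) in which every bidder's payment is at most her budget, then LW(b) ≥ OPT/2. -/
/-!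
Pure Nash equilibria of simultaneous first price auctions with fractionally
subadditive (XOS) budgeted bidders have Liquid Welfare at least half of the
optimal Liquid Welfare.
-/

open Finset

/-- `v` is fractionally subadditive (XOS): the pointwise maximum of a finite
nonempty family of (nonnegative) additive valuations. -/
def IsXOS {m : ℕ} (v : Finset (Fin m) → ℝ) : Prop :=
  ∃ (k : ℕ) (a : Fin (k + 1) → Fin m → ℝ),
    (∀ t j, 0 ≤ a t j) ∧
    ∀ S : Finset (Fin m),
      v S = (Finset.univ : Finset (Fin (k + 1))).sup'
        ⟨0, Finset.mem_univ 0⟩ (fun t => ∑ j ∈ S, a t j)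

/-- A simultaneous first price auction on `m` indivisible items with `n` bidders:
monotone normalized valuations `v i`, budgets `B i ≥ 0`, and a deterministic
allocation rule `win` awarding every item to a bidder with the highest bid on it
(a strictly highest bidder always wins); each winner pays her own bid. -/
structure ItemAuctionFP (n m : ℕ) where
  v : Fin n → Finset (Fin m) → ℝ
  v_empty : ∀ i, v i ∅ = 0
  v_mono : ∀ i (S T : Finset (Fin m)), S ⊆ T → v i S ≤ v i T
  B : Fin n → ℝ
  B_nonneg : ∀ i, 0 ≤ B i
  win : (Fin n → Fin m → ℝ) → Fin m → Fin n
  win_max : ∀ (b : Fin n → Fin m → ℝ) (j : Fin m) (i : Fin n), b i j ≤ b (win b j) j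
  win_strict : ∀ (b : Fin n → Fin m → ℝ) (j : Fin m) (i : Fin n),
    (∀ k, k ≠ i → b k j < b i j) → win b j = i

namespace ItemAuctionFP

variable {n m : ℕ}

/-- The set of items bidder `i` wins under profile `b`. -/
def won (A : ItemAuctionFP n m) (i : Fin n) (b : Fin n → Fin m → ℝ) : Finset (Fin m) :=
  univ.filter fun j => A.win b j = i

/-- First-price payment of bidder `i`. -/
noncomputable def pay (A : ItemAuctionFP n m) (i : Fin n) (b : Fin n → Fin m → ℝ) : ℝ :=
  ∑ j ∈ A.won i b, b i j

/-- Quasilinear utility of bidder `i`. -/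
noncomputable def util (A : ItemAuctionFP n m) (i : Fin n) (b : Fin n → Fin m → ℝ) : ℝ :=
  A.v i (A.won i b) - A.pay i b

/-- Liquid Welfare of a pure bid profile. -/
noncomputable def LW (A : ItemAuctionFP n m) (b : Fin n → Fin m → ℝ) : ℝ :=
  ∑ i, min (A.v i (A.won i b)) (A.B i)

end ItemAuctionFP

/-- Outbidding by `ε` on the set `T` is an admissible deviation. -/
lemma fp_outbid {n m : ℕ} (A : ItemAuctionFP n m)
    (b : Fin n → Fin m → ℝ) (hb_nonneg : ∀ i j, 0 ≤ b i j)
    (hNash : ∀ i (b' : Fin m → ℝ), (∀ j, 0 ≤ b' j) → (∑ j : Fin m, b' j) ≤ A.B i →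
      A.util i (Function.update b i b') ≤ A.util i b)
    (i : Fin n) (T : Finset (Fin m)) (ε : ℝ) (hε : 0 < ε)
    (hB : ∑ j ∈ T, (b (A.win b j) j + ε) ≤ A.B i) :
    A.v i T - ∑ j ∈ T, (b (A.win b j) j + ε) ≤ A.util i b := by
  classical
  let b' : Fin m → ℝ := fun j => if j ∈ T then b (A.win b j) j + ε else 0
  have hb'0 : ∀ j, 0 ≤ b' j := by
    intro j
    have := hb_nonneg (A.win b j) j
    by_cases h : j ∈ T
    · simp only [b', h, if_true]; linarith
    · simp [b', h]
  have hsum : ∑ j, b' j = ∑ j ∈ T, (b (A.win b j) j + ε) := by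
    simp [b', Finset.sum_ite_mem]
  have hN := hNash i b' hb'0 (by rw [hsum]; exact hB)
  have hsub : T ⊆ A.won i (Function.update b i b') := by
    intro j hj
    simp only [ItemAuctionFP.won, mem_filter, mem_univ, true_and]
    apply A.win_strict
    intro k hk
    rw [Function.update_of_ne hk, Function.update_self]
    have := A.win_max b j k
    simp only [b', hj, if_true]
    linarith
  have hv := A.v_mono i _ _ hsub
  have hp : A.pay i (Function.update b i b') ≤ ∑ j, b' j := by
    unfold ItemAuctionFP.pay
    simp only [Function.update_self]
    exact Finset.sum_le_sum_of_subset_of_nonneg (subset_univ _) (fun j _ _ => hb'0 j)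
  have hu : A.util i (Function.update b i b') =
    A.v i (A.won i (Function.update b i b')) - A.pay i (Function.update b i b') := rfl
  linarith

/-- **Liquid price of anarchy of pure Nash equilibria of simultaneous first price
auctions with XOS bidders**: if `b` is a pure Nash equilibrium (against all
nonnegative deviations whose bids sum to at most the deviator's budget) in which
every bidder's payment is within her budget, then the Liquid Welfare of every
allocation (in particular the optimal one) is at most `2 · LW(b)`. -/
theorem liquid_poa_pure_first_price {n m : ℕ} (A : ItemAuctionFP n m)
    (hXOS : ∀ i, IsXOS (A.v i))
    (b : Fin n → Fin m → ℝ) (hb_nonneg : ∀ i j, 0 ≤ b i j)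
    (hb_budget : ∀ i, A.pay i b ≤ A.B i)
    (hNash : ∀ i (b' : Fin m → ℝ), (∀ j, 0 ≤ b' j) → (∑ j : Fin m, b' j) ≤ A.B i →
      A.util i (Function.update b i b') ≤ A.util i b)
    (S : Fin m → Fin n) :
    ∑ i, min (A.v i (univ.filter fun j => S j = i)) (A.B i) ≤ 2 * A.LW b := by
  have hdev := fp_outbid A b hb_nonneg hNash
  have hu0 : ∀ i, 0 ≤ A.util i b := by
    intro i
    have := hdev i ∅ 1 one_pos (by simpa using A.B_nonneg i)
    simpa [A.v_empty] using this
  have hpay0 : ∀ i, 0 ≤ A.pay i b := fun i => Finset.sum_nonneg (fun j _ => hb_nonneg i j)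
  have hu : ∀ i, A.util i b = A.v i (A.won i b) - A.pay i b := fun i => rfl
  have key : ∀ i, min (A.v i (univ.filter fun j => S j = i)) (A.B i) ≤
      min (A.v i (A.won i b)) (A.B i) +
        ∑ j ∈ univ.filter (fun j => S j = i), b (A.win b j) j := by
    intro i
    set T := univ.filter (fun j => S j = i) with hT
    have hpT : 0 ≤ ∑ j ∈ T, b (A.win b j) j := Finset.sum_nonneg (fun j _ => hb_nonneg _ j)
    have hvW : 0 ≤ A.v i (A.won i b) := by linarith [hu0 i, hpay0 i, hu i]
    by_cases h1 : A.B i ≤ A.v i (A.won i b)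
    · rw [min_eq_right h1]
      linarith [min_le_right (A.v i T) (A.B i)]
    rw [min_eq_left (not_le.mp h1).le]
    by_cases h2 : A.B i ≤ ∑ j ∈ T, b (A.win b j) j
    · linarith [min_le_right (A.v i T) (A.B i)]
    push Not at h2
    refine (min_le_left _ _).trans ?_
    apply le_of_forall_pos_le_add
    intro η hη
    set c := min η (A.B i - ∑ j ∈ T, b (A.win b j) j) with hc
    have hc0 : 0 < c := lt_min hη (by linarith)
    have hk : (0 : ℝ) < (T.card : ℝ) + 1 := by positivity
    have hTc : (T.card : ℝ) * (c / ((T.card : ℝ) + 1)) ≤ c := by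
      rw [← mul_div_assoc, div_le_iff₀ hk]
      nlinarith
    have hs : ∑ j ∈ T, (b (A.win b j) j + c / ((T.card : ℝ) + 1)) =
        ∑ j ∈ T, b (A.win b j) j + (T.card : ℝ) * (c / ((T.card : ℝ) + 1)) := by
      rw [Finset.sum_add_distrib, Finset.sum_const, nsmul_eq_mul]
    have hc1 : c ≤ η := min_le_left _ _
    have hc2 : c ≤ A.B i - ∑ j ∈ T, b (A.win b j) j := min_le_right _ _
    have := hdev i T (c / ((T.card : ℝ) + 1)) (div_pos hc0 hk) (by rw [hs]; linarith)
    rw [hs] at this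
    linarith [hu i, hpay0 i]
  have hsumS : ∑ i, ∑ j ∈ univ.filter (fun j => S j = i), b (A.win b j) j =
      ∑ j, b (A.win b j) j := Finset.sum_fiberwise _ _ _
  have hsumW : ∑ i, A.pay i b = ∑ j, b (A.win b j) j := by
    rw [← Finset.sum_fiberwise univ (fun j => A.win b j)]
    refine Finset.sum_congr rfl (fun i _ => Finset.sum_congr rfl ?_)
    intro j hj
    have hj2 : A.win b j = i := by simpa [ItemAuctionFP.won] using hj
    rw [hj2]
  have hLW : ∑ i, A.pay i b ≤ A.LW b :=
    Finset.sum_le_sum (fun i _ => le_min (by linarith [hu0 i, hu i]) (hb_budget i))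
  have hfin := Finset.sum_le_sum (fun i (_ : i ∈ (univ : Finset (Fin n))) => key i)
  rw [Finset.sum_add_distrib, hsumS, ← hsumW] at hfin
  have : A.LW b = ∑ i, min (A.v i (A.won i b)) (A.B i) := rfl
  linarith
end

section
/- (First price deviation lemma) In a simultaneous first price auction, fix a set S ⊆ [m] and a bidder i with a fractionally subadditive valuation v_i, budget B_i ≥ 0, and v_i(S) > 0, and let a_r be an additive valuation from i's XOS family that is maximizing for S (v_i(S) = Σ_{j∈S} a_r({j})). For δ > 0 and a fixed profile b_{-i} of the other bidders' bids, define the deviation b*_i by b*_{ij} = min{ a_r({j}) · min{v_i(S), B_i} / v_i(S), max_{k≠i} b_{kj} + δ } for j ∈ S and b*_{ij} = 0 for j ∉ S. Then u_i(b*_i, b_{-i}) ≥ min{v_i(S), B_i} − Σ_{j∈S} max_{k≠i} b_{kj} − δ·|S|. -/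
/-!
First price deviation lemma: in a simultaneous first price auction, a bidder `i`
with an XOS valuation, deviating to bids that slightly overbid the competition
(capped by `a_r(j) · min{v_i(S), B_i} / v_i(S)`) on the items of a set `S`,
derives utility at least `min{v_i(S), B_i} − Σ_{j∈S} max_{k≠i} b_{kj} − δ|S|`.
-/

open Finset

/-- The highest competing bid `max_{k ≠ i} b_{kj}` (bids are nonnegative). -/
noncomputable def maxOther {n m : ℕ} (b : Fin n → Fin m → ℝ) (i : Fin n) (j : Fin m) : ℝ :=
  Finset.fold max 0 (fun k => b k j) (univ.erase i)

/-- **First price deviation lemma.**  `a` is an additive valuation from bidder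
`i`'s XOS family (`∀ T, Σ_{j∈T} a j ≤ v_i(T)`) maximizing for `S`
(`v_i(S) = Σ_{j∈S} a j`).  Deviating to
`b*_{ij} = min{a j · min{v_i(S), B_i}/v_i(S), max_{k≠i} b_{kj} + δ}` on `j ∈ S`
(and `0` elsewhere) guarantees
`u_i(b*, b_{-i}) ≥ min{v_i(S), B_i} − Σ_{j∈S} max_{k≠i} b_{kj} − δ·|S|`. -/
theorem first_price_deviation_lemma {n m : ℕ} (A : ItemAuctionFP n m)
    (i : Fin n) (S : Finset (Fin m))
    (a : Fin m → ℝ) (ha_nonneg : ∀ j, 0 ≤ a j)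
    (ha_dom : ∀ T : Finset (Fin m), ∑ j ∈ T, a j ≤ A.v i T)
    (ha_max : A.v i S = ∑ j ∈ S, a j)
    (hvS : 0 < A.v i S)
    (δ : ℝ) (hδ : 0 < δ)
    (b : Fin n → Fin m → ℝ) (hb_nonneg : ∀ k j, 0 ≤ b k j)
    (bstar : Fin m → ℝ)
    (hbstar : ∀ j, bstar j =
      if j ∈ S then
        min (a j * min (A.v i S) (A.B i) / A.v i S) (maxOther b i j + δ)
      else 0) :
    A.util i (Function.update b i bstar) ≥
      min (A.v i S) (A.B i) - (∑ j ∈ S, maxOther b i j) - δ * S.card := by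
  have hv := hvS.ne'
  have hM1 : min (A.v i S) (A.B i) / A.v i S ≤ 1 := by
    rw [div_le_one hvS]; exact min_le_left _ _
  have hother : ∀ j k, k ≠ i → b k j ≤ maxOther b i j := by
    intro j k hk
    unfold maxOther
    rw [Finset.le_fold_max]
    exact Or.inr ⟨k, by simp [hk], le_rfl⟩
  have hmo : ∀ j, 0 ≤ maxOther b i j := by
    intro j
    unfold maxOther
    rw [Finset.le_fold_max]
    exact Or.inl le_rfl
  have hsum : ∑ j ∈ S, a j * min (A.v i S) (A.B i) / A.v i S = min (A.v i S) (A.B i) := by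
    rw [← Finset.sum_div, ← Finset.sum_mul, ← ha_max]
    field_simp
  have hc : ∀ j, a j * min (A.v i S) (A.B i) / A.v i S ≤ a j := by
    intro j
    rw [mul_div_assoc]
    exact mul_le_of_le_one_right (ha_nonneg j) hM1
  have hwin : ∀ j, maxOther b i j < bstar j → A.win (Function.update b i bstar) j = i := by
    intro j hj
    apply A.win_strict
    intro k hk
    rw [Function.update_of_ne hk, Function.update_self]
    exact (hother j k hk).trans_lt hj
  have hpt : ∀ j, (if j ∈ S then
      a j * min (A.v i S) (A.B i) / A.v i S - maxOther b i j - δ else 0) ≤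
      if A.win (Function.update b i bstar) j = i then a j - bstar j else 0 := by
    intro j
    have h1 := hbstar j
    have h2 := hc j
    have h3 := hwin j
    have h4 := ha_nonneg j
    by_cases hS : j ∈ S
    · rw [if_pos hS] at h1 ⊢
      split_ifs with hw
      · have := min_le_right (a j * min (A.v i S) (A.B i) / A.v i S) (maxOther b i j + δ)
        linarith
      · have h5 : bstar j ≤ maxOther b i j := not_lt.1 fun h => hw (h3 h)
        rcases min_choice (a j * min (A.v i S) (A.B i) / A.v i S) (maxOther b i j + δ)
          with h | h <;> rw [h] at h1 <;> linarith
    · rw [if_neg hS] at h1 ⊢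
      split_ifs <;> linarith
  have hs := Finset.sum_le_sum (s := Finset.univ) fun j _ => hpt j
  rw [← Finset.sum_filter, ← Finset.sum_filter, Finset.filter_mem_eq_inter,
    Finset.univ_inter, Finset.sum_sub_distrib, Finset.sum_sub_distrib,
    Finset.sum_sub_distrib, hsum, Finset.sum_const, nsmul_eq_mul] at hs
  have hd := ha_dom (A.won i (Function.update b i bstar))
  unfold ItemAuctionFP.util ItemAuctionFP.pay
  simp only [Function.update_self]
  unfold ItemAuctionFP.won at hd ⊢
  linarith
end

section
/- Consider a simultaneous second price auction where every bidder has a fractionally subadditive (XOS) valuation and a budget. If b is a pure Nash equilibrium within the class of strategies satisfying no over-bidding and no over-budgeting (b itself satisfies both, and no bidder can increase her utility by any deviation b'_i satisfying both), then LW(b) ≥ OPT/2. -/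
/-!
Pure Nash equilibria of simultaneous second price auctions with fractionally
subadditive (XOS) budgeted bidders, within the class of no over-bidding and no
over-budgeting strategies, have Liquid Welfare at least half of the optimal
Liquid Welfare.
-/

open Finset

/-- A simultaneous second price auction on `m` indivisible items with `n` bidders:
monotone normalized valuations `v i`, budgets `B i ≥ 0`, and a deterministic
allocation rule `win` awarding every item to a bidder with the highest bid on it;
the winner of an item pays the highest competing bid on it. -/
structure ItemAuctionSP (n m : ℕ) where
  v : Fin n → Finset (Fin m) → ℝ
  v_empty : ∀ i, v i ∅ = 0
  v_mono : ∀ i (S T : Finset (Fin m)), S ⊆ T → v i S ≤ v i T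
  B : Fin n → ℝ
  B_nonneg : ∀ i, 0 ≤ B i
  win : (Fin n → Fin m → ℝ) → Fin m → Fin n
  win_max : ∀ (b : Fin n → Fin m → ℝ) (j : Fin m) (i : Fin n), b i j ≤ b (win b j) j

namespace ItemAuctionSP

variable {n m : ℕ}

/-- The highest competing bid `max_{k ≠ i} b_{kj}` (bids are nonnegative). -/
noncomputable def maxOther (b : Fin n → Fin m → ℝ) (i : Fin n) (j : Fin m) : ℝ :=
  Finset.fold max 0 (fun k => b k j) (univ.erase i)

/-- The set of items bidder `i` wins under profile `b`. -/
def won (A : ItemAuctionSP n m) (i : Fin n) (b : Fin n → Fin m → ℝ) : Finset (Fin m) :=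
  univ.filter fun j => A.win b j = i

/-- Second-price payment of bidder `i`: the highest competing bid on each item won. -/
noncomputable def pay (A : ItemAuctionSP n m) (i : Fin n) (b : Fin n → Fin m → ℝ) : ℝ :=
  ∑ j ∈ A.won i b, maxOther b i j

/-- Quasilinear utility of bidder `i`. -/
noncomputable def util (A : ItemAuctionSP n m) (i : Fin n) (b : Fin n → Fin m → ℝ) : ℝ :=
  A.v i (A.won i b) - A.pay i b

/-- Liquid Welfare of a pure bid profile. -/
noncomputable def LW (A : ItemAuctionSP n m) (b : Fin n → Fin m → ℝ) : ℝ :=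
  ∑ i, min (A.v i (A.won i b)) (A.B i)

/-- No over-bidding: `Σ_{j∈S} b_{ij} ≤ v_i(S)` for every set `S`. -/
def NoOverbid (A : ItemAuctionSP n m) (i : Fin n) (bi : Fin m → ℝ) : Prop :=
  ∀ S : Finset (Fin m), ∑ j ∈ S, bi j ≤ A.v i S

/-- No over-budgeting: bids sum to at most the budget. -/
def NoOverbudget (A : ItemAuctionSP n m) (i : Fin n) (bi : Fin m → ℝ) : Prop :=
  (∑ j : Fin m, bi j) ≤ A.B i

end ItemAuctionSP

theorem maxOther_le_aux {n m : ℕ} (b : Fin n → Fin m → ℝ) (i : Fin n) (j : Fin m) (x : ℝ)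
    (hx : 0 ≤ x) (h : ∀ k, k ≠ i → b k j ≤ x) : ItemAuctionSP.maxOther b i j ≤ x := by
  unfold ItemAuctionSP.maxOther
  rw [Finset.fold_max_le]
  exact ⟨hx, fun k hk => h k (Finset.ne_of_mem_erase hk)⟩

theorem maxOther_nonneg_aux {n m : ℕ} (b : Fin n → Fin m → ℝ) (i : Fin n) (j : Fin m) :
    0 ≤ ItemAuctionSP.maxOther b i j := by
  unfold ItemAuctionSP.maxOther
  rw [Finset.le_fold_max]
  exact Or.inl le_rfl

theorem sum_ite_univ_aux {m : ℕ} (T : Finset (Fin m)) (f : Fin m → ℝ) :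
    ∑ j, (if j ∈ T then f j else 0) = ∑ j ∈ T, f j := by
  simp

/-- **Liquid price of anarchy of pure Nash equilibria of simultaneous second price
auctions with XOS bidders**: if `b` satisfies no over-bidding and no over-budgeting
and no bidder can increase her utility by a deviation satisfying both, then the
Liquid Welfare of every allocation (in particular the optimal one) is at most
`2 · LW(b)`. -/
theorem liquid_poa_pure_second_price {n m : ℕ} (A : ItemAuctionSP n m)
    (hXOS : ∀ i, IsXOS (A.v i))
    (b : Fin n → Fin m → ℝ) (hb_nonneg : ∀ i j, 0 ≤ b i j)
    (hb_nob : ∀ i, A.NoOverbid i (b i))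
    (hb_nobud : ∀ i, A.NoOverbudget i (b i))
    (hNash : ∀ i (b' : Fin m → ℝ), (∀ j, 0 ≤ b' j) →
      A.NoOverbid i b' → A.NoOverbudget i b' →
      A.util i (Function.update b i b') ≤ A.util i b)
    (S : Fin m → Fin n) :
    ∑ i, min (A.v i (univ.filter fun j => S j = i)) (A.B i) ≤ 2 * A.LW b := by
  have hP : ∀ j, 0 ≤ b (A.win b j) j := fun j => hb_nonneg _ _
  have key : ∀ i, min (A.v i (univ.filter fun j => S j = i)) (A.B i) ≤
      min (A.v i (A.won i b)) (A.B i)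
        + ∑ j ∈ univ.filter (fun j => S j = i), b (A.win b j) j := by
    intro i
    set T := univ.filter (fun j => S j = i) with hT
    have hsum : 0 ≤ ∑ j ∈ T, b (A.win b j) j := Finset.sum_nonneg fun j _ => hP j
    rcases le_total (A.B i) (A.v i (A.won i b)) with hB | hB
    · rw [min_eq_right hB]
      linarith [min_le_right (A.v i T) (A.B i)]
    rw [min_eq_left hB]
    obtain ⟨k, a, ha0, ha⟩ := hXOS i
    obtain ⟨t, -, ht⟩ := Finset.exists_mem_eq_sup' (s := (univ : Finset (Fin (k + 1))))
      ⟨0, Finset.mem_univ 0⟩ (fun t => ∑ j ∈ T, a t j)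
    rw [← ha T] at ht
    have hv0 : 0 ≤ A.v i T := by
      rw [← A.v_empty i]; exact A.v_mono i _ _ (Finset.empty_subset _)
    have hmin0 : 0 ≤ min (A.v i T) (A.B i) := le_min hv0 (A.B_nonneg i)
    obtain ⟨c, hc0, hc1, hc⟩ : ∃ c : ℝ, 0 ≤ c ∧ c ≤ 1 ∧ c * A.v i T = min (A.v i T) (A.B i) := by
      rcases hv0.eq_or_lt with h | h
      · refine ⟨0, le_rfl, zero_le_one, ?_⟩
        rw [← h, min_eq_left (A.B_nonneg i)]; simp
      · exact ⟨min (A.v i T) (A.B i) / A.v i T, div_nonneg hmin0 hv0,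
          div_le_one_of_le₀ (min_le_left _ _) hv0, div_mul_cancel₀ _ h.ne'⟩
    set b' : Fin m → ℝ := fun j => if j ∈ T then c * a t j else 0 with hb'
    have hb'0 : ∀ j, 0 ≤ b' j := by
      intro j
      simp only [hb']
      split_ifs
      · exact mul_nonneg hc0 (ha0 t j)
      · exact le_rfl
    have hb'T : ∑ j ∈ T, b' j = min (A.v i T) (A.B i) := by
      rw [← hc, ht, Finset.mul_sum]
      exact Finset.sum_congr rfl fun j hj => by simp only [hb', if_pos hj]
    have hnob : A.NoOverbid i b' := by
      intro R
      rw [ha R]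
      refine le_trans (Finset.sum_le_sum (g := fun j => a t j) fun j _ => ?_)
        (Finset.le_sup' (fun t => ∑ j ∈ R, a t j) (Finset.mem_univ t))
      simp only [hb']
      split_ifs
      · exact mul_le_of_le_one_left (ha0 t j) hc1
      · exact ha0 t j
    have hnobud : A.NoOverbudget i b' := by
      have h1 : ∑ j ∈ T, b' j = ∑ j, b' j :=
        Finset.sum_subset (Finset.subset_univ T) fun j _ hj => by simp only [hb', if_neg hj]
      unfold ItemAuctionSP.NoOverbudget
      rw [← h1, hb'T]
      exact min_le_right _ _
    have hN := hNash i b' hb'0 hnob hnobud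
    set d := Function.update b i b' with hd
    have hdi : d i = b' := by simp [hd]
    have hdk : ∀ k, k ≠ i → d k = b k := fun k hk => by simp [hd, hk]
    have hub : A.util i b ≤ A.v i (A.won i b) := by
      have : 0 ≤ A.pay i b := Finset.sum_nonneg fun j _ => maxOther_nonneg_aux b i j
      unfold ItemAuctionSP.util
      linarith
    have hcmp : ∑ j ∈ T, (b' j - b (A.win b j) j) ≤
        ∑ j ∈ A.won i d, (b' j - ItemAuctionSP.maxOther d i j) := by
      rw [← sum_ite_univ_aux T, ← sum_ite_univ_aux (A.won i d)]
      refine Finset.sum_le_sum fun j _ => ?_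
      have hMP : ItemAuctionSP.maxOther d i j ≤ b (A.win b j) j :=
        maxOther_le_aux d i j _ (hP j) fun k hk => by
          rw [hdk k hk]; exact A.win_max b j k
      by_cases hW : j ∈ A.won i d
      · have hw : A.win d j = i := by simpa [ItemAuctionSP.won] using hW
        have hM : ItemAuctionSP.maxOther d i j ≤ b' j :=
          maxOther_le_aux d i j _ (hb'0 j) fun k _ => by
            have := A.win_max d j k
            rwa [hw, hdi] at this
        rw [if_pos hW]
        split_ifs <;> linarith
      · have hw : A.win d j ≠ i := by simpa [ItemAuctionSP.won] using hW
        have h1 := A.win_max d j i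
        rw [hdi, hdk _ hw] at h1
        have h2 := A.win_max b j (A.win d j)
        rw [if_neg hW]
        split_ifs <;> linarith
    rw [Finset.sum_sub_distrib, Finset.sum_sub_distrib, hb'T] at hcmp
    have h3 := hnob (A.won i d)
    unfold ItemAuctionSP.util ItemAuctionSP.pay at hN
    unfold ItemAuctionSP.util ItemAuctionSP.pay at hub
    linarith
  have hsum := Finset.sum_le_sum fun i (_ : i ∈ (univ : Finset (Fin n))) => key i
  rw [Finset.sum_add_distrib, Finset.sum_fiberwise] at hsum
  have hlast : ∑ j, b (A.win b j) j ≤ A.LW b := by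
    rw [← Finset.sum_fiberwise univ (fun j => A.win b j)]
    refine Finset.sum_le_sum fun i _ => ?_
    have h1 : ∑ j ∈ univ.filter (fun j => A.win b j = i), b (A.win b j) j =
        ∑ j ∈ A.won i b, b i j :=
      Finset.sum_congr rfl fun j hj => by rw [(Finset.mem_filter.mp hj).2]
    rw [h1]
    refine le_min (hb_nob i _) (le_trans ?_ (hb_nobud i))
    exact Finset.sum_le_sum_of_subset_of_nonneg (Finset.subset_univ _) fun j _ _ => hb_nonneg i j
  unfold ItemAuctionSP.LW at hlast ⊢
  linarith
end

section
/- For every integer n ≥ 2, consider the simultaneous first price auction with n bidders and n indivisible items in which every bidder i has additive values v_{i1} = n^4, v_{ij} = 1 for 2 ≤ j ≤ n, and budget B_i = 1, where ties among highest bids on item 1 are broken uniformly at random and an item on which all bids are zero remains unallocated. Then the pure bid profile b in which every bidder bids 1 on item 1 and 0 on every other item is a Nash equilibrium (no bidder can increase her expected utility, over the tie-breaking randomness, by any deviation whose bids sum to at most her budget), its expected Liquid Welfare is LW(b) = 1, and the optimal Liquid Welfare is OPT = n; hence the Liquid Price of Anarchy is at least n. -/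
/-!
With a randomized tie-breaking rule, simultaneous first price auctions have
Liquid Price of Anarchy `Ω(n)` even for pure strategies: with `n` bidders and
`n` items, all values `n⁴` for item 1 and `1` for the other items, and unit
budgets, the profile where everybody bids her full budget on item 1 is a pure
Nash equilibrium with expected Liquid Welfare `1`, whereas `OPT = n`.
-/

open Finset

/-- A (possibly randomized) allocation rule for a simultaneous first price
auction: `q c` is a finitely supported probability distribution over partial
allocations `a : Fin m → Option (Fin n)`.  Any supported allocation awards each
item with a positive bid to a bidder with the highest bid on it and leaves items
with all-zero bids unallocated. -/
structure RandRule (n m : ℕ) where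
  q : (Fin n → Fin m → ℝ) → (Fin m → Option (Fin n)) → ℝ
  q_nonneg : ∀ c a, 0 ≤ q c a
  q_sum : ∀ c, ∑ a : Fin m → Option (Fin n), q c a = 1
  supp_max : ∀ c a, q c a ≠ 0 → ∀ (j : Fin m) (i : Fin n), a j = some i →
    ∀ k, c k j ≤ c i j
  supp_pos : ∀ c a, q c a ≠ 0 → ∀ j : Fin m, (∃ i, 0 < c i j) → (a j).isSome
  supp_zero : ∀ c a, q c a ≠ 0 → ∀ j : Fin m, (∀ i, c i j = 0) → a j = none

/-- Expected utility of bidder `i` under bid profile `c` (first price: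
a winner pays her own bid), over the tie-breaking randomness. -/
noncomputable def EU {n m : ℕ} (R : RandRule n m) (v : Fin n → Fin m → ℝ)
    (i : Fin n) (c : Fin n → Fin m → ℝ) : ℝ :=
  ∑ a : Fin m → Option (Fin n), R.q c a *
    ∑ j : Fin m, if a j = some i then v i j - c i j else 0

/-- Expected Liquid Welfare of bid profile `c` over the tie-breaking randomness. -/
noncomputable def LWr {n m : ℕ} (R : RandRule n m) (v : Fin n → Fin m → ℝ)
    (B : Fin n → ℝ) (c : Fin n → Fin m → ℝ) : ℝ :=
  ∑ i : Fin n, ∑ a : Fin m → Option (Fin n),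
    R.q c a * min (∑ j : Fin m, if a j = some i then v i j else 0) (B i)

/-- The set of bidders with a positive highest bid on item `j0`. -/
noncomputable def tieSet {n m : ℕ} (c : Fin n → Fin m → ℝ) (j0 : Fin m) : Finset (Fin n) :=
  univ.filter fun i => 0 < c i j0 ∧ ∀ k, c k j0 ≤ c i j0

/-- **Randomized tie-breaking lower bound.**  For `n ≥ 2` bidders and `n` items,
values `v i j = n⁴` for `j = j0` (item 1) and `1` otherwise, budgets `B i = 1`,
and any first price allocation rule that breaks ties on item `j0` uniformly at
random among the highest (positive) bidders: the profile `b` where everyone bids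
`1` on `j0` and `0` elsewhere is a pure Nash equilibrium, its expected Liquid
Welfare equals `1`, and the optimal Liquid Welfare equals `n`; hence the Liquid
Price of Anarchy is at least `n`. -/
theorem randomized_tiebreak_lpoa_linear (n : ℕ) (hn : 2 ≤ n)
    (j0 : Fin n) (hj0 : (j0 : ℕ) = 0)
    (v : Fin n → Fin n → ℝ) (hv : ∀ i j, v i j = if j = j0 then (n : ℝ) ^ 4 else 1)
    (B : Fin n → ℝ) (hB : ∀ i, B i = 1)
    (b : Fin n → Fin n → ℝ) (hb : ∀ i j, b i j = if j = j0 then 1 else 0)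
    (R : RandRule n n)
    (hunif : ∀ c : Fin n → Fin n → ℝ, ∀ i ∈ tieSet c j0,
      ∑ a ∈ univ.filter (fun a : Fin n → Option (Fin n) => a j0 = some i), R.q c a =
        1 / ((tieSet c j0).card : ℝ)) :
    (∀ i (c' : Fin n → ℝ), (∀ j, 0 ≤ c' j) → (∑ j : Fin n, c' j) ≤ B i →
        EU R v i (Function.update b i c') ≤ EU R v i b) ∧
    LWr R v B b = 1 ∧
    (∃ alloc : Fin n → Fin n,
      ∑ i, min (∑ j ∈ univ.filter (fun j => alloc j = i), v i j) (B i) = n) ∧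
    (∀ alloc : Fin n → Fin n,
      ∑ i, min (∑ j ∈ univ.filter (fun j => alloc j = i), v i j) (B i) ≤ n) := by
  have hn0 : (2 : ℝ) ≤ n := by exact_mod_cast hn
  have hn4 : (1 : ℝ) ≤ (n : ℝ) ^ 4 := one_le_pow₀ (by linarith)
  have hv1 : ∀ i j, 1 ≤ v i j := by
    intro i j
    rw [hv]
    split_ifs
    · exact hn4
    · exact le_rfl
  -- items other than `j0` stay unallocated under `b`
  have hnone : ∀ a, R.q b a ≠ 0 → ∀ j, j ≠ j0 → a j = none := by
    intro a ha j hj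
    exact R.supp_zero b a ha j (fun i => by rw [hb, if_neg hj])
  have hsome : ∀ a, R.q b a ≠ 0 → ∃ k, a j0 = some k := by
    intro a ha
    exact Option.isSome_iff_exists.mp
      (R.supp_pos b a ha j0 ⟨j0, by rw [hb, if_pos rfl]; exact one_pos⟩)
  have htie : tieSet b j0 = univ := by
    ext i
    simp [tieSet, hb]
  have hEU : ∀ i, EU R v i b = ((n : ℝ) ^ 4 - 1) * (1 / n) := by
    intro i
    have h1 := hunif b i (by rw [htie]; exact mem_univ i)
    rw [htie, card_univ, Fintype.card_fin] at h1
    rw [← h1, mul_sum, sum_filter]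
    unfold EU
    refine sum_congr rfl fun a _ => ?_
    by_cases ha : R.q b a = 0
    · simp [ha]
    · rw [Finset.sum_eq_single j0]
      · rw [hv, hb, if_pos rfl, if_pos rfl]
        split_ifs <;> ring
      · intro j _ hj
        rw [hnone a ha j hj]
        simp
      · intro h
        exact absurd (mem_univ _) h
  refine ⟨?_, ?_, ?_, ?_⟩
  · intro i c' hc0 hcs
    rw [hB] at hcs
    have hle : c' j0 ≤ 1 := (single_le_sum (fun j _ => hc0 j) (mem_univ j0)).trans hcs
    rcases hle.eq_or_lt with h1 | hlt
    · have hc : c' = b i := by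
        funext j
        rw [hb]
        split_ifs with hj
        · rw [hj, h1]
        · have h2 := Finset.sum_le_sum_of_subset_of_nonneg (f := c')
            (subset_univ ({j, j0} : Finset (Fin n))) (fun k _ _ => hc0 k)
          rw [sum_pair hj] at h2
          have := hc0 j
          linarith
      rw [hc, Function.update_eq_self]
    · rw [hEU]
      obtain ⟨k, hk⟩ : ∃ k : Fin n, k ≠ i := by
        haveI : Nontrivial (Fin n) := Fin.nontrivial_iff_two_le.mpr hn
        exact exists_ne i
      set c := Function.update b i c' with hc
      have hci : c i = c' := by simp [hc]
      have hck : c k j0 = 1 := by simp [hc, hk, hb]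
      have hbound : EU R v i c ≤ ∑ a, R.q c a * ((n : ℝ) - 1) := by
        unfold EU
        refine sum_le_sum fun a _ => ?_
        by_cases ha : R.q c a = 0
        · simp [ha]
        · refine mul_le_mul_of_nonneg_left ?_ (R.q_nonneg c a)
          have hne : a j0 ≠ some i := by
            intro h
            have := R.supp_max c a ha j0 i h k
            rw [hck, hci] at this
            linarith
          calc (∑ j, if a j = some i then v i j - c i j else 0)
              ≤ ∑ j, (if j = j0 then (0 : ℝ) else 1) := by
                refine sum_le_sum fun j _ => ?_
                by_cases hj : j = j0
                · subst hj
                  simp [hne]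
                · rw [if_neg hj, hv, if_neg hj, hci]
                  have := hc0 j
                  split_ifs <;> linarith
            _ = (n : ℝ) - 1 := by
                have h3 : ∀ j : Fin n, (if j = j0 then (0 : ℝ) else 1)
                    = 1 - (if j = j0 then 1 else 0) := by
                  intro j
                  split_ifs <;> norm_num
                rw [sum_congr rfl fun j _ => h3 j, sum_sub_distrib]
                simp
      rw [← sum_mul, R.q_sum, one_mul] at hbound
      refine hbound.trans ?_
      rw [mul_one_div, le_div_iff₀ (by linarith)]
      have h5 : (n : ℝ) ^ 2 ≤ (n : ℝ) ^ 4 := pow_le_pow_right₀ (by linarith) (by norm_num)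
      nlinarith
  · unfold LWr
    rw [sum_comm, ← R.q_sum b]
    refine sum_congr rfl fun a _ => ?_
    by_cases ha : R.q b a = 0
    · simp [ha]
    · obtain ⟨k, hk⟩ := hsome a ha
      rw [← mul_sum]
      have h6 : ∀ i, min (∑ j : Fin n, if a j = some i then v i j else 0) (B i)
          = if i = k then 1 else 0 := by
        intro i
        rw [Finset.sum_eq_single j0, hB, hk]
        · by_cases hik : i = k
          · subst hik
            simp [hv1]
          · have : k ≠ i := fun h => hik h.symm
            simp [hik, this]
        · intro j _ hj
          rw [hnone a ha j hj]
          simp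
        · intro h
          exact absurd (mem_univ _) h
      rw [sum_congr rfl fun i _ => h6 i]
      simp
  · refine ⟨id, ?_⟩
    have h7 : ∀ i, min (∑ j ∈ univ.filter (fun j : Fin n => id j = i), v i j) (B i) = 1 := by
      intro i
      rw [hB]
      refine min_eq_right ((hv1 i i).trans ?_)
      exact single_le_sum (f := fun j => v i j)
        (fun j _ => zero_le_one.trans (hv1 i j)) (by simp)
    rw [sum_congr rfl fun i _ => h7 i]
    simp
  · intro alloc
    calc ∑ i, min (∑ j ∈ univ.filter (fun j => alloc j = i), v i j) (B i)
        ≤ ∑ i : Fin n, (1 : ℝ) := sum_le_sum fun i _ => (min_le_right _ _).trans (hB i).le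
      _ = n := by simp
end

section
/- (Revenue is bounded by Liquid Welfare under no over-bidding and no over-budgeting) Consider the share model with n bidders with additive values v_{ij} ≥ 0 and budgets B_i ≥ 0 over m items each divided into h identical shares, where every share is awarded to a bidder with the highest bid on it. If a pure bid profile b satisfies no over-bidding (each bidder i's bid on any share of item j is at most v_{ij}/h) and no over-budgeting (each bidder i's bids sum to at most B_i), then the sum over all shares of the highest bid is at most the Liquid Welfare: Σ_{j=1}^m Σ_{ℓ=1}^h max_i b_{ij}^ℓ ≤ Σ_i min{v_i(x_i(b)), B_i} = LW(b). -/
/-!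
In the share model, if a pure bid profile satisfies no over-bidding (each bid on
a share of item `j` is at most `v i j / h`) and no over-budgeting (each bidder's
bids sum to at most her budget), then the sum over all shares of the highest bid
is at most the Liquid Welfare of the resulting allocation.
-/

open Finset

/-- **Revenue is bounded by Liquid Welfare.**  `n` bidders with additive values
`v i j ≥ 0` and budgets `B i ≥ 0`; `m` items each divided into `h` shares; bids
`b i j ℓ ≥ 0` on every share; `win` awards every share to a bidder with the
highest bid on it.  Under no over-bidding and no over-budgeting, the sum of the
highest bids over all shares is at most `LW(b) = Σ_i min{v_i(x_i(b)), B_i}`. -/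
theorem revenue_le_liquid_welfare (n m h : ℕ)
    (v : Fin n → Fin m → ℝ) (hv : ∀ i j, 0 ≤ v i j)
    (B : Fin n → ℝ) (hB : ∀ i, 0 ≤ B i)
    (b : Fin n → Fin m → Fin h → ℝ) (hb : ∀ i j ℓ, 0 ≤ b i j ℓ)
    (win : Fin m → Fin h → Fin n)
    (hwin : ∀ (j : Fin m) (ℓ : Fin h) (i : Fin n), b i j ℓ ≤ b (win j ℓ) j ℓ)
    (hNOB : ∀ (i : Fin n) (j : Fin m) (ℓ : Fin h), b i j ℓ ≤ v i j / h)
    (hNBD : ∀ i : Fin n, (∑ j : Fin m, ∑ ℓ : Fin h, b i j ℓ) ≤ B i) :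
    ∑ j : Fin m, ∑ ℓ : Fin h, Finset.fold max 0 (fun i => b i j ℓ) univ ≤
      ∑ i : Fin n,
        min (∑ j : Fin m, ∑ ℓ : Fin h, if win j ℓ = i then v i j / h else 0) (B i) := by
  calc ∑ j : Fin m, ∑ ℓ : Fin h, Finset.fold max 0 (fun i => b i j ℓ) univ
      ≤ ∑ j : Fin m, ∑ ℓ : Fin h, ∑ i : Fin n, (if win j ℓ = i then b i j ℓ else 0) := by
        refine Finset.sum_le_sum fun j _ => Finset.sum_le_sum fun ℓ _ => ?_
        rw [Finset.sum_ite_eq, if_pos (Finset.mem_univ _), Finset.fold_max_le]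
        exact ⟨hb _ _ _, fun i _ => hwin j ℓ i⟩
    _ = ∑ i : Fin n, ∑ j : Fin m, ∑ ℓ : Fin h, (if win j ℓ = i then b i j ℓ else 0) := by
        rw [Finset.sum_comm]
        conv_rhs => rw [Finset.sum_comm]
        rw [Finset.sum_comm]
        exact Finset.sum_congr rfl fun j _ => Finset.sum_comm
    _ ≤ _ := by
        refine Finset.sum_le_sum fun i _ => le_min ?_ (le_trans ?_ (hNBD i))
        · refine Finset.sum_le_sum fun j _ => Finset.sum_le_sum fun ℓ _ => ?_
          split_ifs
          · exact hNOB i j ℓ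
          · exact le_rfl
        · refine Finset.sum_le_sum fun j _ => Finset.sum_le_sum fun ℓ _ => ?_
          split_ifs
          · exact le_rfl
          · exact hb i j ℓ
end

section
/- For every ε with 0 < ε < 1 there exist a simultaneous second price auction with 2 bidders and 2 indivisible items with additive valuations and budgets, and a pure Nash equilibrium b within the class of strategies satisfying no over-bidding and no over-budgeting (b itself satisfies both, and no bidder can increase her utility by any deviation satisfying both), such that OPT ≥ (2 − ε) · LW(b). Hence the bound LW(b) ≥ OPT/2 for pure Nash equilibria of simultaneous second price auctions is tight. -/
/-!
Tightness of the factor-2 Liquid Welfare guarantee for pure Nash equilibria of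
simultaneous second price auctions: for every `0 < ε < 1` there is a 2-bidder,
2-item auction with additive valuations and budgets admitting a pure Nash
equilibrium `b` (within the class of no over-bidding, no over-budgeting
strategies) with `OPT ≥ (2 − ε) · LW(b)`.
-/

open Finset

/-- Item values: bidder 0 values both items at 1, bidder 1 only item 0, at 1. -/
def tightVal : Fin 2 → Fin 2 → ℝ := ![![1, 1], ![1, 0]]

lemma tightVal_nonneg (i j : Fin 2) : 0 ≤ tightVal i j := by
  fin_cases i <;> fin_cases j <;> simp [tightVal]

/-- The tight instance: budgets 1, ties in favour of bidder 0. -/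
noncomputable def tightAuction : ItemAuctionSP 2 2 where
  v i S := ∑ j ∈ S, tightVal i j
  v_empty i := by simp
  v_mono i S T h := Finset.sum_le_sum_of_subset_of_nonneg h
    (fun j _ _ => tightVal_nonneg i j)
  B _ := 1
  B_nonneg _ := zero_le_one
  win b j := if b 1 j ≤ b 0 j then 0 else 1
  win_max b j i := by
    split_ifs with h
    · fin_cases i
      · exact le_refl _
      · exact h
    · fin_cases i
      · exact (not_le.mp h).le
      · exact le_refl _

/-- The equilibrium: bidder 0 bids her whole budget on item 0, bidder 1 bids 0. -/
def tightBid : Fin 2 → Fin 2 → ℝ := ![![1, 0], ![0, 0]]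

lemma tightBid_nonneg (i j : Fin 2) : 0 ≤ tightBid i j := by
  fin_cases i <;> fin_cases j <;> simp [tightBid]

lemma tightBid_le (i j : Fin 2) : tightBid i j ≤ tightVal i j := by
  fin_cases i <;> fin_cases j <;> simp [tightBid, tightVal]

lemma won_zero : tightAuction.won 0 tightBid = univ := by
  ext j; fin_cases j <;> simp [ItemAuctionSP.won, tightAuction, tightBid]

lemma won_one : tightAuction.won 1 tightBid = ∅ := by
  ext j; fin_cases j <;> simp [ItemAuctionSP.won, tightAuction, tightBid]

lemma maxOther_nonneg (b : Fin 2 → Fin 2 → ℝ) (i j : Fin 2) :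
    0 ≤ ItemAuctionSP.maxOther b i j := by
  unfold ItemAuctionSP.maxOther
  rw [Finset.le_fold_max]
  exact Or.inl le_rfl

lemma pay_nonneg (b : Fin 2 → Fin 2 → ℝ) (i : Fin 2) : 0 ≤ tightAuction.pay i b :=
  Finset.sum_nonneg fun j _ => maxOther_nonneg b i j

lemma util_zero : tightAuction.util 0 tightBid = tightAuction.v 0 univ := by
  have h : (univ.erase 0 : Finset (Fin 2)) = {1} := by decide
  rw [ItemAuctionSP.util, ItemAuctionSP.pay, won_zero]
  simp [ItemAuctionSP.maxOther, h, tightBid, Fin.sum_univ_two]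

lemma util_one : tightAuction.util 1 tightBid = 0 := by
  simp [ItemAuctionSP.util, ItemAuctionSP.pay, won_one, tightAuction.v_empty]

lemma LW_tight : tightAuction.LW tightBid = 1 := by
  rw [ItemAuctionSP.LW, Fin.sum_univ_two, won_zero, won_one]
  simp [tightAuction, tightVal, Fin.sum_univ_two]

/-- **Tightness for simultaneous second price auctions**: for every
`0 < ε < 1` there are a simultaneous second price auction with `2` bidders and
`2` indivisible items, additive valuations and budgets, and a pure Nash
equilibrium `b` within the class of no over-bidding and no over-budgeting
strategies, such that some allocation has Liquid Welfare at least
`(2 − ε) · LW(b)`; hence `OPT ≥ (2 − ε) · LW(b)` and the bound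
`LW(b) ≥ OPT/2` is tight. -/
theorem second_price_lpoa_two_tight (ε : ℝ) (hε0 : 0 < ε) (hε1 : ε < 1) :
    ∃ (A : ItemAuctionSP 2 2) (b : Fin 2 → Fin 2 → ℝ),
      (∀ i, ∃ a : Fin 2 → ℝ, (∀ j, 0 ≤ a j) ∧
        ∀ S : Finset (Fin 2), A.v i S = ∑ j ∈ S, a j) ∧
      (∀ i j, 0 ≤ b i j) ∧
      (∀ i, A.NoOverbid i (b i)) ∧
      (∀ i, A.NoOverbudget i (b i)) ∧
      (∀ i (b' : Fin 2 → ℝ), (∀ j, 0 ≤ b' j) →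
        A.NoOverbid i b' → A.NoOverbudget i b' →
        A.util i (Function.update b i b') ≤ A.util i b) ∧
      ∃ alloc : Fin 2 → Fin 2,
        (2 - ε) * A.LW b ≤
          ∑ i, min (A.v i (univ.filter fun j => alloc j = i)) (A.B i) := by
  refine ⟨tightAuction, tightBid, fun i => ⟨tightVal i, tightVal_nonneg i, fun S => rfl⟩,
    tightBid_nonneg, fun i S => Finset.sum_le_sum fun j _ => tightBid_le i j, ?_, ?_,
    ![1, 0], ?_⟩
  · intro i
    fin_cases i <;> simp [ItemAuctionSP.NoOverbudget, tightAuction, tightBid]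
  · intro i b' hb' hv _
    fin_cases i
    · show tightAuction.util 0 (Function.update tightBid 0 b') ≤ tightAuction.util 0 tightBid
      rw [util_zero, ItemAuctionSP.util]
      have h1 := pay_nonneg (Function.update tightBid 0 b') 0
      have h2 := tightAuction.v_mono 0 _ _
        (Finset.subset_univ (tightAuction.won 0 (Function.update tightBid 0 b')))
      linarith
    · show tightAuction.util 1 (Function.update tightBid 1 b') ≤ tightAuction.util 1 tightBid
      have h0 := hv {0}
      have h1 := hv {1}
      simp [tightAuction, tightVal] at h0 h1
      have hw : tightAuction.won 1 (Function.update tightBid 1 b') = ∅ := by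
        ext j
        fin_cases j <;> simp [ItemAuctionSP.won, tightAuction, tightBid, h0, h1]
      rw [util_one, ItemAuctionSP.util, ItemAuctionSP.pay, hw, tightAuction.v_empty]
      simp
  · have e0 : (univ.filter fun j : Fin 2 => (![1, 0] : Fin 2 → Fin 2) j = 0) = {1} := by decide
    have e1 : (univ.filter fun j : Fin 2 => (![1, 0] : Fin 2 → Fin 2) j = 1) = {0} := by decide
    rw [LW_tight, Fin.sum_univ_two, e0, e1]
    simp [tightAuction, tightVal]
    linarith
end
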